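/- Degree-3 modular differential equation for the elliptic genus of Calabi–Yau fivefolds: with all heat operators taken with index m = 5/2, the weak Jacobi form φ_{0,5/2} = φ_{0,3/2}·φ_{0,1} satisfies H^{(5/2)}_{4}(H^{(5/2)}_{2}(H^{(5/2)}_{0}(φ_{0,5/2})))(τ,z) − (611/25)·E₄(τ)·H^{(5/2)}_{0}(φ_{0,5/2})(τ,z) + (88/25)·E₆(τ)·φ_{0,5/2}(τ,z) = 0 at every point (τ,z) ∈ ℍ × ℂ with ϑ(τ,z) ≠ 0. -/

import Mathlib

/-!
All objects are expressed through `ϑ` and its `z`-derivatives (`Th k` is the `k`-th one), which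
satisfy the heat equation `∂ϑ/∂τ = κ ∂²ϑ/∂z²` with `κ = 1/(4πi)`.

An entire function of `z` that transforms like a Jacobi form of index `m` is determined by finitely
many Fourier coefficients (`idx1_dep`, `odd_idx2_prop`). This gives the two classical identities
`-(log ϑ)'' = ℘ + e` (`exists_eC`) and `ϑ'(0)³ ϑ(2z) = -ϑ(z)⁴ ℘'(z)` (`dup`), where `℘` is the
Weierstrass function of `ℤ + ℤτ` and `e` depends on `τ` only.

Differentiating the Weierstrass equation `℘'² = 4℘³ - g₂℘ - g₃` in `τ`, with the help of the heat
equation, and comparing powers of `℘` yields Ramanujan's differential equations for `e`, `g₂`, `g₃`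
(`ramanujan`). The invariants `g₂`, `g₃` are multiples of `E₄`, `E₆`, and since
`g₂³ - 27g₃²` is a multiple of `η²⁴`, comparison of logarithmic derivatives shows
`e = (π²/3) E₂` (`eC_eq`). Consequently `φ_{0,5/2} = K ϑ⁵ ℘ ℘'` with `K` a function of `τ`
(`phi052_eq`).

The modular heat operators of index `5/2` preserve the shape `K ϑ⁵ (a ℘ ℘' + b ℘')` with `a`, `b`
functions of `τ`, and act on the pair `(a, b)` by an explicit rule (`heat_step`). Starting from
`(1, 0)`, Ramanujan's equations give in turn a multiple of `(0, g₂)`, a combination of `(g₂, 0)`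
and `(0, g₃)`, and a combination of `(g₃, 0)` and `(0, g₂²)`. The last is a combination of
`g₂ · (0, g₂)` and `g₃ · (1, 0)`, which is the asserted equation.
-/

open Complex Real

noncomputable section

/-- The Jacobi theta series `ϑ(τ,z) = q^{1/8} ζ^{1/2} ∑_{n∈ℤ} (−1)^n q^{n(n+1)/2} ζ^n`
with `q = e^{2πiτ}`, `ζ = e^{2πiz}`. -/
def thetaJ (τ z : ℂ) : ℂ :=
  Complex.exp (π * I * τ / 4) * Complex.exp (π * I * z) *
    ∑' n : ℤ, (-1 : ℂ) ^ n * Complex.exp (π * I * τ * n * (n + 1)) *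
      Complex.exp (2 * π * I * z * n)

/-- The Dedekind eta function `η(τ) = q^{1/24} ∏_{n≥1} (1 − q^n)`. -/
def etaD (τ : ℂ) : ℂ :=
  Complex.exp (π * I * τ / 12) * ∏' n : ℕ, (1 - Complex.exp (2 * π * I * τ * (n + 1)))

/-- The divisor power sum `σ_k(n) = ∑_{d ∣ n} d^k`. -/
def sigmaD (k n : ℕ) : ℕ := ∑ d ∈ n.divisors, d ^ k

/-- The quasi-modular Eisenstein series `E₂`. -/
def Eis2 (τ : ℂ) : ℂ :=
  1 - 24 * ∑' n : ℕ, (sigmaD 1 (n + 1) : ℂ) * Complex.exp (2 * π * I * τ * (n + 1))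

/-- The Eisenstein series `E₄`. -/
def Eis4 (τ : ℂ) : ℂ :=
  1 + 240 * ∑' n : ℕ, (sigmaD 3 (n + 1) : ℂ) * Complex.exp (2 * π * I * τ * (n + 1))

/-- The Eisenstein series `E₆`. -/
def Eis6 (τ : ℂ) : ℂ :=
  1 - 504 * ∑' n : ℕ, (sigmaD 5 (n + 1) : ℂ) * Complex.exp (2 * π * I * τ * (n + 1))

/-- The heat operator `H^{(m)}φ = (12/(2πi)) ∂φ/∂τ + (3/(4π²m)) ∂²φ/∂z²` of index `m`. -/
def heatOp (m : ℚ) (φ : ℂ → ℂ → ℂ) (τ z : ℂ) : ℂ :=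
  12 / (2 * π * I) * deriv (fun t => φ t z) τ
    + 3 / (4 * π ^ 2 * (m : ℂ)) * deriv (deriv (φ τ)) z

/-- The modular heat operator `H^{(m)}_k φ = H^{(m)}φ − ((2k−1)/2)·E₂·φ`. -/
def heatMod (m k : ℚ) (φ : ℂ → ℂ → ℂ) (τ z : ℂ) : ℂ :=
  heatOp m φ τ z - (2 * (k : ℂ) - 1) / 2 * Eis2 τ * φ τ z

/-- The weak Jacobi form `φ_{−2,1} = ϑ²/η⁶` of weight −2 and index 1. -/
def phim21 (τ z : ℂ) : ℂ := thetaJ τ z ^ 2 / etaD τ ^ 6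

/-- The weak Jacobi form `φ_{0,1}` of weight 0 and index 1:
`φ_{0,1} = (3/π²)·(ϑ·∂²ϑ/∂z² − (∂ϑ/∂z)²)/η⁶ + E₂·ϑ²/η⁶`. -/
def phi01 (τ z : ℂ) : ℂ :=
  3 / (π : ℂ) ^ 2 *
      (thetaJ τ z * deriv (deriv (thetaJ τ)) z - (deriv (thetaJ τ) z) ^ 2) / etaD τ ^ 6
    + Eis2 τ * thetaJ τ z ^ 2 / etaD τ ^ 6

/-- The weak Jacobi form `φ_{0,3/2}(τ,z) = ϑ(τ,2z)/ϑ(τ,z)` of weight 0 and index 3/2. -/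
def phi032 (τ z : ℂ) : ℂ := thetaJ τ (2 * z) / thetaJ τ z

/-- The weak Jacobi form `φ_{0,5/2} = φ_{0,3/2}·φ_{0,1}` of weight 0 and index 5/2. -/
def phi052 (τ z : ℂ) : ℂ := phi032 τ z * phi01 τ z

/-! ### The theta series and its derivatives -/

/-- The `n`-th term of the `k`-fold termwise `z`-derivative of `ϑ`, written with the half-integral
exponent `n + 1/2`. -/
def thTerm (k : ℕ) (n : ℤ) (τ z : ℂ) : ℂ :=
  (-1 : ℂ) ^ n * (π * I * (2 * n + 1)) ^ k *
    Complex.exp (π * I * τ * (n + 1 / 2) ^ 2 + π * I * (2 * n + 1) * z)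

/-- The `k`-th `z`-derivative of `ϑ`, as a series. -/
def Th (k : ℕ) (τ z : ℂ) : ℂ := ∑' n : ℤ, thTerm k n τ z

lemma thetaJ_eq_Th : thetaJ = Th 0 := by
  ext τ z
  rw [thetaJ, Th, ← tsum_mul_left]
  refine tsum_congr fun n => ?_
  rw [thTerm, pow_zero, mul_one, show (π : ℂ) * I * τ * (n + 1 / 2) ^ 2 + π * I * (2 * n + 1) * z
    = (π * I * τ / 4 + π * I * z) + (π * I * τ * n * (n + 1) + 2 * π * I * z * n) by ring,
    Complex.exp_add, Complex.exp_add, Complex.exp_add]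
  ring

/-- The summable majorant of the theta series on `{Im τ > T} × {|Im z| < S}`. -/
def thBound (k : ℕ) (S T : ℝ) (n : ℤ) : ℝ :=
  (3 * π) ^ k * ((|n| ^ k : ℝ) + (|n| ^ 0 : ℝ)) * Real.exp (π * S) *
    Real.exp (-π * (T * n ^ 2 - 2 * (T / 2 + S) * |n|))

lemma summable_thBound (k : ℕ) (S : ℝ) {T : ℝ} (hT : 0 < T) : Summable (thBound k S T) := by
  have h := ((summable_pow_mul_jacobiTheta₂_term_bound (T / 2 + S) hT k).add
    (summable_pow_mul_jacobiTheta₂_term_bound (T / 2 + S) hT 0)).mul_left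
      ((3 * π) ^ k * Real.exp (π * S))
  refine h.congr fun n => ?_
  rw [thBound]
  ring

lemma norm_thTerm_le (k : ℕ) {S T : ℝ} (n : ℤ) {τ z : ℂ} (hT : 0 < T) (hτ : T < τ.im)
    (hz : |z.im| < S) : ‖thTerm k n τ z‖ ≤ thBound k S T n := by
  have h1 : ‖((-1 : ℂ)) ^ n‖ = 1 := by simp
  have habs : |2 * (n : ℝ) + 1| ≤ 2 * |(n : ℝ)| + 1 := by
    refine (abs_add_le _ _).trans ?_
    rw [abs_mul]; simp
  have hk : |2 * (n : ℝ) + 1| ^ k ≤ 3 ^ k * (|(n : ℝ)| ^ k + 1) := by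
    rcases eq_or_ne n 0 with rfl | hn
    · have : (1 : ℝ) ≤ 3 ^ k := one_le_pow₀ (by norm_num)
      have h0 : (0 : ℝ) ≤ |((0 : ℤ) : ℝ)| ^ k := by positivity
      simp only [Int.cast_zero, mul_zero, zero_add, abs_one, one_pow] at *
      nlinarith
    · have hn1 : (1 : ℝ) ≤ |(n : ℝ)| := by exact_mod_cast Int.one_le_abs hn
      calc |2 * (n : ℝ) + 1| ^ k ≤ (3 * |(n : ℝ)|) ^ k := by gcongr; linarith
        _ = 3 ^ k * |(n : ℝ)| ^ k := mul_pow _ _ _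
        _ ≤ _ := by gcongr; linarith
  have h2 : ‖((π : ℂ) * I * (2 * n + 1)) ^ k‖ ≤ (3 * π) ^ k * (|(n : ℝ)| ^ k + 1) := by
    have : ‖(2 * (n : ℂ) + 1)‖ = |2 * (n : ℝ) + 1| := by
      rw [← Real.norm_eq_abs, ← Complex.norm_real]; push_cast; rfl
    rw [norm_pow, norm_mul, norm_mul, norm_I, this, Complex.norm_real, Real.norm_eq_abs,
      abs_of_pos pi_pos, mul_one, mul_pow, mul_pow]
    calc π ^ k * |2 * (n : ℝ) + 1| ^ k ≤ π ^ k * (3 ^ k * (|(n : ℝ)| ^ k + 1)) := by gcongr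
      _ = _ := by ring
  have h3 : ‖Complex.exp (π * I * τ * (n + 1 / 2) ^ 2 + π * I * (2 * n + 1) * z)‖ ≤
      Real.exp (π * S) * Real.exp (-π * (T * n ^ 2 - 2 * (T / 2 + S) * |(n : ℝ)|)) := by
    rw [Complex.norm_exp, ← Real.exp_add]
    apply Real.exp_le_exp.mpr
    have e1 : (π * I * τ * (n + 1 / 2) ^ 2 + π * I * (2 * n + 1) * z : ℂ).re
        = π * (-(τ.im * ((n : ℝ) + 1 / 2) ^ 2) - (2 * n + 1) * z.im) := by
      have a1 : (π * I * τ * (n + 1 / 2) ^ 2 + π * I * (2 * n + 1) * z : ℂ)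
        = ((π * ((n : ℝ) + 1 / 2) ^ 2 : ℝ) : ℂ) * (I * τ)
          + ((π * (2 * n + 1) : ℝ) : ℂ) * (I * z) := by
        push_cast; ring
      rw [a1, Complex.add_re, Complex.re_ofReal_mul, Complex.re_ofReal_mul]
      simp
      ring
    have e2 : π * S + -π * (T * n ^ 2 - 2 * (T / 2 + S) * |(n : ℝ)|)
        = π * (S - T * n ^ 2 + (T + 2 * S) * |(n : ℝ)|) := by ring
    rw [e1, e2]
    refine mul_le_mul_of_nonneg_left ?_ pi_pos.le
    have b1 : T * ((n : ℝ) + 1 / 2) ^ 2 ≤ τ.im * ((n : ℝ) + 1 / 2) ^ 2 := by gcongr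
    have b2 : -((2 * (n : ℝ) + 1) * z.im) ≤ (2 * |(n : ℝ)| + 1) * S := by
      calc _ ≤ |(2 * (n : ℝ) + 1) * z.im| := neg_le_abs _
        _ = |2 * (n : ℝ) + 1| * |z.im| := abs_mul _ _
        _ ≤ _ := by gcongr
    have b3 : -(n : ℝ) ≤ |(n : ℝ)| := neg_le_abs _
    nlinarith
  rw [thTerm, norm_mul, norm_mul, h1, one_mul, thBound, pow_zero, mul_assoc ((3 * π) ^ k * _)]
  simp only [Int.cast_abs]
  exact mul_le_mul h2 h3 (norm_nonneg _) (by positivity)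

lemma hasDerivAt_thTerm_z (k : ℕ) (n : ℤ) (τ z : ℂ) :
    HasDerivAt (thTerm k n τ) (thTerm (k + 1) n τ z) z := by
  unfold thTerm
  have := (((hasDerivAt_id z).const_mul (π * I * (2 * n + 1) : ℂ)).const_add
    (π * I * τ * (n + 1 / 2) ^ 2 : ℂ)).cexp.const_mul ((-1 : ℂ) ^ n * (π * I * (2 * n + 1)) ^ k)
  refine this.congr_deriv ?_
  simp only [id]
  ring

/-- The constant `κ = 1/(4πi)` of the heat equation `∂ϑ/∂τ = κ ∂²ϑ/∂z²`. -/
def kap : ℂ := 1 / (4 * π * I)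

lemma hasDerivAt_thTerm_tau (k : ℕ) (n : ℤ) (τ z : ℂ) :
    HasDerivAt (fun t => thTerm k n t z) (kap * thTerm (k + 2) n τ z) τ := by
  unfold thTerm
  have := ((((hasDerivAt_id τ).const_mul (π * I : ℂ)).mul_const ((n + 1 / 2 : ℂ) ^ 2)).add_const
    (π * I * (2 * n + 1) * z : ℂ)).cexp.const_mul ((-1 : ℂ) ^ n * (π * I * (2 * n + 1)) ^ k)
  refine this.congr_deriv ?_
  have hπ : (π : ℂ) ≠ 0 := by exact_mod_cast pi_ne_zero
  simp only [id, kap]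
  field_simp
  ring

lemma hasDerivAt_Th_z (k : ℕ) {τ : ℂ} (hτ : 0 < τ.im) (z : ℂ) :
    HasDerivAt (Th k τ) (Th (k + 1) τ z) z := by
  set S := |z.im| + 1
  have hU : IsOpen {w : ℂ | |w.im| < S} := isOpen_lt (by fun_prop) (by fun_prop)
  have hz : z ∈ {w : ℂ | |w.im| < S} := by simp [S]
  have hb : ∀ (i : ℤ) (w : ℂ), w ∈ {w : ℂ | |w.im| < S} →
      ‖thTerm k i τ w‖ ≤ thBound k S (τ.im / 2) i :=
    fun i w hw => norm_thTerm_le k i (by linarith) (by linarith) hw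
  have hd : ∀ i : ℤ, DifferentiableOn ℂ (thTerm k i τ) {w : ℂ | |w.im| < S} :=
    fun i w _ => (hasDerivAt_thTerm_z k i τ w).differentiableAt.differentiableWithinAt
  have hs := summable_thBound k S (half_pos hτ)
  have h1 := differentiableOn_tsum_of_summable_norm hs hd hU hb
  have h2 := (hasSum_deriv_of_summable_norm hs hd hU hb hz).tsum_eq
  have h3 := (h1.differentiableAt (hU.mem_nhds hz)).hasDerivAt
  rw [← h2] at h3
  refine h3.congr_deriv (tsum_congr fun n => (hasDerivAt_thTerm_z k n τ z).deriv)

lemma hasDerivAt_Th_tau (k : ℕ) {τ : ℂ} (hτ : 0 < τ.im) (z : ℂ) :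
    HasDerivAt (fun t => Th k t z) (kap * Th (k + 2) τ z) τ := by
  set S := |z.im| + 1
  have hU : IsOpen {w : ℂ | τ.im / 2 < w.im} := isOpen_lt (by fun_prop) (by fun_prop)
  have hz : τ ∈ {w : ℂ | τ.im / 2 < w.im} := by
    simp only [Set.mem_ofPred_eq]; linarith
  have hb : ∀ (i : ℤ) (w : ℂ), w ∈ {w : ℂ | τ.im / 2 < w.im} →
      ‖thTerm k i w z‖ ≤ thBound k S (τ.im / 2) i :=
    fun i w hw => norm_thTerm_le k i (half_pos hτ) hw (by simp [S])
  have hd : ∀ i : ℤ, DifferentiableOn ℂ (fun t => thTerm k i t z) {w : ℂ | τ.im / 2 < w.im} :=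
    fun i w _ => (hasDerivAt_thTerm_tau k i w z).differentiableAt.differentiableWithinAt
  have hs := summable_thBound k S (half_pos hτ)
  have h1 := differentiableOn_tsum_of_summable_norm hs hd hU hb
  have h2 := (hasSum_deriv_of_summable_norm hs hd hU hb hz).tsum_eq
  have h3 := (h1.differentiableAt (hU.mem_nhds hz)).hasDerivAt
  rw [← h2] at h3
  refine h3.congr_deriv ?_
  rw [Th, ← tsum_mul_left]
  exact tsum_congr fun n => (hasDerivAt_thTerm_tau k n τ z).deriv

lemma differentiable_Th (k : ℕ) {τ : ℂ} (hτ : 0 < τ.im) : Differentiable ℂ (Th k τ) :=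
  fun z => (hasDerivAt_Th_z k hτ z).differentiableAt

lemma deriv_Th (k : ℕ) {τ : ℂ} (hτ : 0 < τ.im) : deriv (Th k τ) = Th (k + 1) τ :=
  funext fun z => (hasDerivAt_Th_z k hτ z).deriv

lemma summable_thTerm (k : ℕ) {τ : ℂ} (hτ : 0 < τ.im) (z : ℂ) :
    Summable fun n => ‖thTerm k n τ z‖ :=
  (summable_thBound k (|z.im| + 1) (half_pos hτ)).of_nonneg_of_le (fun _ => norm_nonneg _)
    fun n => norm_thTerm_le k n (half_pos hτ) (by linarith) (by simp)

lemma Th_add_one (k : ℕ) (τ z : ℂ) : Th k τ (z + 1) = - Th k τ z := by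
  rw [Th, Th, ← tsum_neg]
  refine tsum_congr fun n => ?_
  rw [thTerm, thTerm, show (π : ℂ) * I * τ * (n + 1 / 2) ^ 2 + π * I * (2 * n + 1) * (z + 1)
    = (π * I * τ * (n + 1 / 2) ^ 2 + π * I * (2 * n + 1) * z) + (n * (2 * π * I) + π * I) by ring,
    Complex.exp_add _ (_ + _), Complex.exp_add _ (π * I), Complex.exp_int_mul_two_pi_mul_I,
    Complex.exp_pi_mul_I]
  ring

lemma Th_neg (k : ℕ) (τ z : ℂ) : Th k τ (-z) = (-1) ^ (k + 1) * Th k τ z := by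
  rw [Th, Th, ← tsum_mul_left]
  -- the substitution `n ↦ -1 - n` changes the sign of `n + 1/2`
  rw [← (Equiv.subLeft (-1 : ℤ)).tsum_eq]
  refine tsum_congr fun n => ?_
  have h : ((-1 : ℂ)) ^ (-1 - n) = - (-1) ^ n := by
    rw [zpow_sub₀ (by norm_num)]
    rcases Int.even_or_odd n with h | h
    · simp [h.neg_one_zpow]
    · simp [h.neg_one_zpow]
  rw [Equiv.subLeft_apply, thTerm, thTerm, h]
  push_cast
  rw [show (π : ℂ) * I * (2 * (-1 - n) + 1) = (-1) * (π * I * (2 * n + 1)) by ring, mul_pow,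
    show (π : ℂ) * I * τ * (-1 - n + 1 / 2) ^ 2 + (-1) * (π * I * (2 * n + 1)) * -z =
      π * I * τ * (n + 1 / 2) ^ 2 + π * I * (2 * n + 1) * z by ring]
  ring

/-- The automorphy factor of `ϑ` under `z ↦ z + τ`. -/
def efac (τ z : ℂ) : ℂ := - Complex.exp (-(π * I * τ) - 2 * π * I * z)

lemma efac_ne_zero (τ z : ℂ) : efac τ z ≠ 0 := neg_ne_zero.mpr (Complex.exp_ne_zero _)

lemma hasDerivAt_efac (τ z : ℂ) : HasDerivAt (efac τ) (-(2 * π * I) * efac τ z) z := by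
  unfold efac
  have := (((hasDerivAt_id z).const_mul (2 * π * I : ℂ)).const_sub (-(π * I * τ) : ℂ)).cexp.neg
  refine this.congr_deriv ?_
  simp only [id]
  ring

lemma Th_add_tau_zero (τ z : ℂ) : Th 0 τ (z + τ) = efac τ z * Th 0 τ z := by
  rw [Th, Th, ← tsum_mul_left]
  conv_rhs => rw [← (Equiv.addRight (1 : ℤ)).tsum_eq]
  refine tsum_congr fun n => ?_
  have h : ((-1 : ℂ)) ^ (n + 1) = - (-1) ^ n := by
    rw [zpow_add₀ (by norm_num)]; simp
  rw [Equiv.coe_addRight, thTerm, thTerm, h, efac]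
  push_cast
  simp only [pow_zero, mul_one, neg_mul, mul_neg, neg_neg]
  rw [mul_left_comm, ← Complex.exp_add]
  congr 2
  ring

lemma Th_add_tau_succ (k : ℕ) {τ : ℂ} (hτ : 0 < τ.im) {g g' : ℂ → ℂ}
    (h : ∀ z, Th k τ (z + τ) = efac τ z * g z) (hg : ∀ z, HasDerivAt g (g' z) z) (z : ℂ) :
    Th (k + 1) τ (z + τ) = efac τ z * (g' z - 2 * π * I * g z) := by
  have h1 : HasDerivAt (fun w => Th k τ (w + τ)) (Th (k + 1) τ (z + τ)) z :=
    (hasDerivAt_Th_z k hτ (z + τ)).comp_add_const z τ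
  have h2 := (hasDerivAt_efac τ z).mul (hg z)
  rw [show (fun w => Th k τ (w + τ)) = efac τ * g from funext h] at h1
  rw [h1.unique h2]
  ring

lemma Th_add_tau_one {τ : ℂ} (hτ : 0 < τ.im) (z : ℂ) :
    Th 1 τ (z + τ) = efac τ z * (Th 1 τ z - 2 * π * I * Th 0 τ z) :=
  Th_add_tau_succ 0 hτ (Th_add_tau_zero τ) (hasDerivAt_Th_z 0 hτ) z

lemma Th_add_tau_two {τ : ℂ} (hτ : 0 < τ.im) (z : ℂ) :
    Th 2 τ (z + τ) = efac τ z *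
      (Th 2 τ z - 2 * (2 * π * I) * Th 1 τ z + (2 * π * I) ^ 2 * Th 0 τ z) := by
  rw [Th_add_tau_succ 1 hτ (Th_add_tau_one hτ)
    (fun z => (hasDerivAt_Th_z 1 hτ z).sub ((hasDerivAt_Th_z 0 hτ z).const_mul _))]
  ring

lemma Th_add_tau_three {τ : ℂ} (hτ : 0 < τ.im) (z : ℂ) :
    Th 3 τ (z + τ) = efac τ z * (Th 3 τ z - 3 * (2 * π * I) * Th 2 τ z
      + 3 * (2 * π * I) ^ 2 * Th 1 τ z - (2 * π * I) ^ 3 * Th 0 τ z) := by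
  rw [Th_add_tau_succ 2 hτ (Th_add_tau_two hτ)
    (fun z => ((hasDerivAt_Th_z 2 hτ z).sub ((hasDerivAt_Th_z 1 hτ z).const_mul _)).add
      ((hasDerivAt_Th_z 0 hτ z).const_mul _))]
  ring

/-! ### Entire functions of index `m` and their Fourier coefficients -/

/-- Entire functions with the elliptic transformation behaviour of a Jacobi form of index `m`
in the variable `z`: `G(z+1) = G(z)` and `G(z+τ) = e^{-2πim(2z+τ)} G(z)`. -/
structure IsIdx (m : ℕ) (τ : ℂ) (G : ℂ → ℂ) : Prop where
  diff : Differentiable ℂ G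
  add_one : ∀ z, G (z + 1) = G z
  add_tau : ∀ z, G (z + τ) = Complex.exp (-(2 * π * I * m * (2 * z + τ))) * G z

/-- Fourier coefficients of a `1`-periodic function along the real axis. -/
def fc (G : ℂ → ℂ) (n : ℤ) : ℂ := ∫ x in (0 : ℝ)..1, Complex.exp (-(2 * π * I * n * x)) * G x

/-- The integral of an entire `1`-periodic function over a horizontal period does not depend
on the height. -/
lemma integral_shift {F : ℂ → ℂ} (hF : Differentiable ℂ F) (h1 : ∀ z, F (z + 1) = F z) (w : ℂ) :
    ∫ x in (0 : ℝ)..1, F (x + w) = ∫ x in (0 : ℝ)..1, F x := by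
  obtain ⟨A, hA⟩ := hF.isExactOn_univ
  have hA' : ∀ z, HasDerivAt A (F z) z := fun z => hA z trivial
  have key : ∀ w : ℂ, ∫ x in (0 : ℝ)..1, F (x + w) = A (w + 1) - A w := by
    intro w
    have := intervalIntegral.integral_eq_sub_of_hasDerivAt (a := (0 : ℝ)) (b := 1)
      (f := fun x : ℝ => A (x + w)) (f' := fun x : ℝ => F (x + w))
      (fun x _ => by
        have h := (hA' (x + w)).comp (x : ℂ) ((hasDerivAt_id (x : ℂ)).add_const w)
        simpa [Function.comp_def] using h.comp_ofReal)
      (Continuous.intervalIntegrable (by have := hF.continuous; fun_prop) _ _)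
    rw [this]
    simp [add_comm]
  have hconst : ∀ w, HasDerivAt (fun w => A (w + 1) - A w) 0 w := by
    intro w
    have h := ((hA' (w + 1)).comp w ((hasDerivAt_id w).add_const 1)).sub (hA' w)
    rw [h1, mul_one, sub_self] at h
    exact h
  have := is_const_of_deriv_eq_zero (fun w => (hconst w).differentiableAt)
    (fun w => (hconst w).deriv) w 0
  have h0 := key 0
  simp only [add_zero] at h0
  rw [key w, this, h0]

lemma fc_shift {m : ℕ} {τ : ℂ} {G : ℂ → ℂ} (hG : IsIdx m τ G) (n : ℤ) :
    fc G (n + 2 * m) = Complex.exp (2 * π * I * (n + m) * τ) * fc G n := by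
  have hd := hG.diff
  have h := integral_shift (F := fun z => Complex.exp (-(2 * π * I * n * z)) * G z)
    (by fun_prop) (by
      intro z
      rw [hG.add_one, show -(2 * π * I * n * (z + 1)) = -(2 * π * I * n * z) + (-n : ℤ) * (2 * π * I)
        by push_cast; ring, Complex.exp_add, Complex.exp_int_mul_two_pi_mul_I, mul_one]) τ
  simp only [fc]
  rw [← h, ← intervalIntegral.integral_const_mul]
  refine intervalIntegral.integral_congr fun x _ => ?_
  simp only [hG.add_tau]
  rw [← mul_assoc, ← mul_assoc, ← Complex.exp_add, ← Complex.exp_add]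
  push_cast
  ring_nf

/-- Uniqueness of Fourier coefficients, for entire functions of index `m`. -/
lemma eq_zero_of_fc {m : ℕ} {τ : ℂ} {G : ℂ → ℂ} (hG : IsIdx m τ G) (h : ∀ n, fc G n = 0) :
    ∀ z, G z = 0 := by
  have hd := hG.diff
  have hper : Function.Periodic (fun x : ℝ => G x) 1 := fun x => by
    simpa using hG.add_one x
  have : Fact ((0 : ℝ) < 1) := ⟨one_pos⟩
  let g : C(AddCircle (1 : ℝ), ℂ) := ⟨hper.lift,
    continuous_coinduced_dom.mpr
      (show Continuous fun x : ℝ => G x by have := hd.continuous; fun_prop)⟩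
  have hco : ∀ n, fourierCoeff g n = 0 := by
    intro n
    have hn := h n
    rw [fc] at hn
    rw [fourierCoeff_eq_intervalIntegral _ n 0, div_one, one_smul, zero_add, ← hn]
    refine intervalIntegral.integral_congr fun x _ => ?_
    have : g (x : AddCircle (1 : ℝ)) = G x := rfl
    simp only [this, smul_eq_mul, fourier_coe_apply]
    congr 2
    push_cast
    ring
  have hs := hasSum_fourier_series_of_summable (f := g) (by
    simp only [funext hco]; exact summable_zero)
  have hg0 : g = 0 := by
    simp only [hco, zero_smul] at hs
    exact hs.unique hasSum_zero
  have hreal : ∀ x : ℝ, G x = 0 := fun x => by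
    have : g (x : AddCircle (1 : ℝ)) = G x := rfl
    rw [← this, hg0]; rfl
  have han : AnalyticOnNhd ℂ G Set.univ := fun z _ => hd.analyticAt z
  have hfreq : ∃ᶠ z in nhdsWithin (0 : ℂ) {0}ᶜ, G z = 0 := by
    have ht : Filter.Tendsto (fun x : ℝ => (x : ℂ)) (nhdsWithin 0 {0}ᶜ) (nhdsWithin 0 {0}ᶜ) := by
      refine tendsto_nhdsWithin_iff.mpr ⟨?_, ?_⟩
      · exact (Complex.continuous_ofReal.tendsto' 0 0 (by simp)).mono_left nhdsWithin_le_nhds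
      · filter_upwards [self_mem_nhdsWithin] with x hx
        simpa using hx
    exact ht.frequently (Filter.Frequently.of_forall hreal)
  intro z
  exact han.eqOn_zero_of_preconnected_of_frequently_eq_zero isPreconnected_univ
    (Set.mem_univ 0) hfreq (Set.mem_univ z)

lemma fc_add {m : ℕ} {τ : ℂ} {G : ℂ → ℂ} (hG : IsIdx m τ G) {n : ℤ} (hn : fc G n = 0) (k : ℤ) :
    fc G (n + 2 * m * k) = 0 := by
  induction k using Int.induction_on with
  | zero => simpa using hn
  | succ k ih =>
    rw [show n + 2 * m * ((k : ℤ) + 1) = (n + 2 * m * k) + 2 * m by ring, fc_shift hG, ih, mul_zero]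
  | pred k ih =>
    rw [show n + 2 * m * -(k : ℤ) = (n + 2 * m * (-k - 1)) + 2 * m by ring, fc_shift hG] at ih
    exact (mul_eq_zero.mp ih).resolve_left (Complex.exp_ne_zero _)

lemma IsIdx.lin {m : ℕ} {τ : ℂ} {ι : Type*} {G : ι → ℂ → ℂ} (s : Finset ι)
    (hG : ∀ i, IsIdx m τ (G i)) (a : ι → ℂ) : IsIdx m τ (fun z => ∑ i ∈ s, a i * G i z) where
  diff := by
    have := fun i => (hG i).diff
    fun_prop
  add_one z := by simp [(hG _).add_one]
  add_tau z := by
    rw [Finset.mul_sum]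
    refine Finset.sum_congr rfl fun i _ => ?_
    rw [(hG i).add_tau]; ring

lemma fc_lin {m : ℕ} {τ : ℂ} {ι : Type*} {G : ι → ℂ → ℂ} (s : Finset ι)
    (hG : ∀ i, IsIdx m τ (G i)) (a : ι → ℂ) (n : ℤ) :
    fc (fun z => ∑ i ∈ s, a i * G i z) n = ∑ i ∈ s, a i * fc (G i) n := by
  simp only [fc, ← intervalIntegral.integral_const_mul]
  rw [← intervalIntegral.integral_finsetSum]
  · refine intervalIntegral.integral_congr fun x _ => ?_
    simp only [Finset.mul_sum]
    refine Finset.sum_congr rfl fun i _ => ?_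
    ring
  · intro i _
    have := (hG i).diff.continuous
    exact Continuous.intervalIntegrable (by fun_prop) _ _

/-- Three functions of index one are linearly dependent, since `c₀` and `c₁` determine all
Fourier coefficients. -/
lemma idx1_dep {τ : ℂ} {G : Fin 3 → ℂ → ℂ} (hG : ∀ i, IsIdx 1 τ (G i)) :
    ∃ a : Fin 3 → ℂ, a ≠ 0 ∧ ∀ z, ∑ i, a i * G i z = 0 := by
  have hdep : ¬ LinearIndependent ℂ (fun i : Fin 3 => ![fc (G i) 0, fc (G i) 1]) := by
    intro h
    have := h.fintype_card_le_finrank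
    simp at this
  obtain ⟨a, ha, i, hi⟩ := Fintype.not_linearIndependent_iff.mp hdep
  refine ⟨a, fun h => hi (by simp [h]), ?_⟩
  have hI := IsIdx.lin Finset.univ hG a
  have h0 : fc (fun z => ∑ i, a i * G i z) 0 = 0 := by
    rw [fc_lin _ hG]
    simpa using congrFun ha 0
  have h1 : fc (fun z => ∑ i, a i * G i z) 1 = 0 := by
    rw [fc_lin _ hG]
    simpa using congrFun ha 1
  refine eq_zero_of_fc hI fun n => ?_
  have e := Int.emod_add_mul_ediv n 2
  rcases Int.emod_two_eq_zero_or_one n with h | h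
  · have := fc_add hI h0 (n / 2)
    rwa [show (0 : ℤ) + 2 * (1 : ℕ) * (n / 2) = n by push_cast; omega] at this
  · have := fc_add hI h1 (n / 2)
    rwa [show (1 : ℤ) + 2 * (1 : ℕ) * (n / 2) = n by push_cast; omega] at this

lemma fc_neg {m : ℕ} {τ : ℂ} {G : ℂ → ℂ} (hG : IsIdx m τ G) (ho : ∀ z, G (-z) = - G z) (n : ℤ) :
    fc G (-n) = - fc G n := by
  have h := intervalIntegral.integral_comp_sub_left (a := 0) (b := 1)
    (fun x : ℝ => Complex.exp (-(2 * π * I * n * x)) * G x) 1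
  simp only [sub_self, sub_zero] at h
  rw [fc, fc, ← h, ← intervalIntegral.integral_neg]
  refine intervalIntegral.integral_congr fun x _ => ?_
  have e1 : G ((1 - x : ℝ) : ℂ) = - G x := by
    rw [← ho, ← hG.add_one (-x)]; congr 1; push_cast; ring
  simp only [e1]
  rw [show -(2 * π * I * n * ((1 - x : ℝ) : ℂ)) = -(2 * π * I * (-n : ℤ) * x) + (-n : ℤ) * (2 * π * I)
    by push_cast; ring, Complex.exp_add, Complex.exp_int_mul_two_pi_mul_I]
  ring

lemma odd_idx2_zero {τ : ℂ} {G : ℂ → ℂ} (hG : IsIdx 2 τ G) (ho : ∀ z, G (-z) = - G z)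
    (h1 : fc G 1 = 0) : ∀ z, G z = 0 := by
  have h0 : fc G 0 = 0 := by
    have := fc_neg hG ho 0
    rw [neg_zero] at this
    exact self_eq_neg.mp this
  have h2 : fc G 2 = 0 := by
    have := fc_neg hG ho 2
    have h' := fc_shift hG (-2)
    norm_num at h'
    rw [← h'] at this
    exact self_eq_neg.mp this
  have h3 : fc G (-1) = 0 := by rw [fc_neg hG ho, h1, neg_zero]
  refine eq_zero_of_fc hG fun n => ?_
  have : n % 4 = 0 ∨ n % 4 = 1 ∨ n % 4 = 2 ∨ n % 4 = 3 := by omega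
  rcases this with h | h | h | h
  · have := fc_add hG h0 (n / 4)
    rwa [show (0 : ℤ) + 2 * (2 : ℕ) * (n / 4) = n by push_cast; omega] at this
  · have := fc_add hG h1 (n / 4)
    rwa [show (1 : ℤ) + 2 * (2 : ℕ) * (n / 4) = n by push_cast; omega] at this
  · have := fc_add hG h2 (n / 4)
    rwa [show (2 : ℤ) + 2 * (2 : ℕ) * (n / 4) = n by push_cast; omega] at this
  · have := fc_add hG h3 (n / 4 + 1)
    rwa [show (-1 : ℤ) + 2 * (2 : ℕ) * (n / 4 + 1) = n by push_cast; omega] at this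

/-- Odd functions of index two form a space of dimension at most one. -/
lemma odd_idx2_prop {τ : ℂ} {G H : ℂ → ℂ} (hG : IsIdx 2 τ G) (hH : IsIdx 2 τ H)
    (oG : ∀ z, G (-z) = - G z) (oH : ∀ z, H (-z) = - H z) :
    ∃ a b : ℂ, (a ≠ 0 ∨ b ≠ 0) ∧ ∀ z, a * G z + b * H z = 0 := by
  by_cases h : fc G 1 = 0
  · exact ⟨1, 0, Or.inl one_ne_zero, fun z => by simp [odd_idx2_zero hG oG h z]⟩
  · refine ⟨fc H 1, - fc G 1, Or.inr (neg_ne_zero.mpr h), ?_⟩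
    have hF : ∀ i : Fin 2, IsIdx 2 τ (![G, H] i) := by
      intro i; fin_cases i <;> simp [hG, hH]
    have hl := IsIdx.lin Finset.univ hF ![fc H 1, - fc G 1]
    have hc := fc_lin Finset.univ hF ![fc H 1, - fc G 1] 1
    simp only [Fin.sum_univ_two, Matrix.cons_val_zero, Matrix.cons_val_one] at hl hc
    refine odd_idx2_zero hl (fun z => ?_) ?_
    · rw [oG, oH]; ring
    · rw [hc]; ring

lemma Th_zero_ne {τ : ℂ} (hτ : 0 < τ.im) : ∃ z, Th 0 τ z ≠ 0 := by
  -- the zeroth Fourier coefficient of `e^{-πiz} ϑ(z)` is `e^{πiτ/4}`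
  by_contra! hf
  let F : ℤ → C(ℝ, ℂ) := fun n =>
    ⟨fun x => Complex.exp (-(π * I * x)) * thTerm 0 n τ x, by unfold thTerm; fun_prop⟩
  have hsum : Summable fun n : ℤ =>
      ‖(F n).restrict (⟨Set.uIcc 0 1, isCompact_uIcc⟩ : TopologicalSpace.Compacts ℝ)‖ := by
    refine (summable_thBound 0 1 (half_pos hτ)).of_nonneg_of_le (fun _ => norm_nonneg _) fun n => ?_
    refine (ContinuousMap.norm_le _ ((norm_nonneg _).trans
      (norm_thTerm_le (z := 0) 0 n (half_pos hτ) (half_lt_self hτ) (by simp)))).mpr fun x => ?_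
    have h1 : ‖Complex.exp (-(π * I * (x : ℝ)))‖ = 1 := by
      rw [show -(π * I * (x : ℝ)) = ((-(π * x) : ℝ) : ℂ) * I by push_cast; ring,
        Complex.norm_exp_ofReal_mul_I]
    have h2 := norm_thTerm_le (z := ((x : ℝ) : ℂ)) 0 n (half_pos hτ) (half_lt_self hτ) (S := 1)
      (by simp)
    simpa [F, h1] using h2
  have hS := intervalIntegral.hasSum_intervalIntegral_of_summable_norm hsum
  have hz : ∀ x : ℝ, ∑' n, F n x = 0 := fun x => by
    have : ∑' n, F n x = Complex.exp (-(π * I * x)) * Th 0 τ x := by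
      rw [Th, ← tsum_mul_left]; rfl
    rw [this, hf, mul_zero]
  simp only [hz, intervalIntegral.integral_zero] at hS
  have hI : ∀ n : ℤ, ∫ x in (0 : ℝ)..1, F n x =
      if n = 0 then Complex.exp (π * I * τ / 4) else 0 := by
    intro n
    have e : ∀ x : ℝ, F n x = ((-1 : ℂ) ^ n * Complex.exp (π * I * τ * (n + 1 / 2) ^ 2)) *
        Complex.exp ((2 * π * I * n) * x) := by
      intro x
      simp only [F, ContinuousMap.coe_mk, thTerm, pow_zero, mul_one]
      rw [mul_left_comm, ← Complex.exp_add, mul_assoc ((-1 : ℂ) ^ n), ← Complex.exp_add]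
      congr 2
      ring
    simp only [e, intervalIntegral.integral_const_mul]
    split_ifs with hn
    · subst hn
      simp only [zpow_zero, one_mul, Int.cast_zero, mul_zero, zero_mul, Complex.exp_zero,
        intervalIntegral.integral_const]
      norm_num
      ring_nf
    · rw [integral_exp_mul_complex (by simp [hn, Real.pi_ne_zero])]
      simp only [ofReal_one, mul_one, ofReal_zero, mul_zero, Complex.exp_zero]
      rw [show 2 * π * I * (n : ℂ) = n * (2 * π * I) by ring, Complex.exp_int_mul_two_pi_mul_I]
      simp
  simp only [hI] at hS
  exact Complex.exp_ne_zero _ ((hasSum_ite_eq 0 _).unique hS)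

/-- Cancellation of entire factors. -/
lemma entire_cancel {F G : ℂ → ℂ} (hF : Differentiable ℂ F) (hG : Differentiable ℂ G)
    (h0 : ∃ z, F z ≠ 0) (h : ∀ z, F z * G z = 0) : ∀ z, G z = 0 := by
  have h1 : AnalyticOnNhd ℂ F Set.univ := fun z _ => hF.analyticAt z
  have h2 : AnalyticOnNhd ℂ G Set.univ := fun z _ => hG.analyticAt z
  rcases h1.eq_zero_or_eq_zero_of_mul_eq_zero h2 (fun z _ => h z) isPreconnected_univ with h | h
  · obtain ⟨z, hz⟩ := h0
    exact absurd (h z trivial) hz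
  · exact fun z => h z trivial

/-! ### The Weierstrass function and the simple zero of `ϑ` -/

/-- The period pair `(1, τ)`. -/
def perPair (τ : ℂ) (hτ : 0 < τ.im) : PeriodPair where
  ω₁ := 1
  ω₂ := τ
  indep := by
    rw [LinearIndependent.pair_iff]
    intro s t h
    have him := congrArg Complex.im h
    have hre := congrArg Complex.re h
    simp at him hre
    have ht : t = 0 := him.resolve_right hτ.ne'
    subst ht
    simpa using hre

lemma lattice_induct {τ : ℂ} (hτ : 0 < τ.im) {p : ℂ → Prop} (h0 : p 0)
    (h1 : ∀ z, p (z + 1) ↔ p z) (h2 : ∀ z, p (z + τ) ↔ p z) :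
    ∀ l ∈ (perPair τ hτ).lattice, p l := by
  intro l hl
  obtain ⟨m, n, rfl⟩ := PeriodPair.mem_lattice.mp hl
  simp only [perPair, mul_one]
  have hm : p m := by
    induction m using Int.induction_on with
    | zero => simpa using h0
    | succ k ih => push_cast at ih ⊢; exact (h1 _).mpr (ih (PeriodPair.mem_lattice.mpr ⟨k, n, rfl⟩))
    | pred k ih =>
      rw [← h1]; push_cast at ih ⊢; simpa using ih (PeriodPair.mem_lattice.mpr ⟨-k, n, by simp⟩)
  clear hl
  induction n using Int.induction_on with
  | zero => simpa using hm
  | succ k ih =>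
    push_cast at ih ⊢; rw [add_mul, one_mul, ← add_assoc]; exact (h2 _).mpr ih
  | pred k ih =>
    rw [← h2]; push_cast at ih ⊢
    convert ih using 1; ring

lemma one_mem {τ : ℂ} (hτ : 0 < τ.im) : (1 : ℂ) ∈ (perPair τ hτ).lattice :=
  (perPair τ hτ).ω₁_mem_lattice

lemma tau_mem {τ : ℂ} (hτ : 0 < τ.im) : τ ∈ (perPair τ hτ).lattice :=
  (perPair τ hτ).ω₂_mem_lattice

lemma Th_even_zero {k : ℕ} (hk : Even k) (τ : ℂ) : Th k τ 0 = 0 := by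
  have h := Th_neg k τ 0
  rw [neg_zero, hk.add_one.neg_one_pow, neg_one_mul] at h
  exact self_eq_neg.mp h

lemma Th_lattice {τ : ℂ} (hτ : 0 < τ.im) : ∀ l ∈ (perPair τ hτ).lattice, Th 0 τ l = 0 :=
  lattice_induct hτ (Th_even_zero Even.zero τ) (fun z => by rw [Th_add_one, neg_eq_zero])
    (fun z => by rw [Th_add_tau_zero]; simp [efac_ne_zero])

lemma notMem_of_Th_ne {τ z : ℂ} (hτ : 0 < τ.im) (hz : Th 0 τ z ≠ 0) :
    z ∉ (perPair τ hτ).lattice := fun h => hz (Th_lattice hτ z h)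

lemma efac_sq (τ z : ℂ) : efac τ z ^ 2 = Complex.exp (-(2 * π * I * (1 : ℕ) * (2 * z + τ))) := by
  rw [efac, neg_sq, ← Complex.exp_nat_mul]
  congr 1; push_cast; ring

lemma isIdx_sq {τ : ℂ} (hτ : 0 < τ.im) : IsIdx 1 τ (fun z => Th 0 τ z ^ 2) where
  diff := (differentiable_Th 0 hτ).pow 2
  add_one z := by rw [Th_add_one, neg_sq]
  add_tau z := by rw [Th_add_tau_zero, mul_pow, efac_sq]

/-- `ϑ_z² - ϑ ϑ_zz`, that is `-ϑ²` times the second logarithmic derivative of `ϑ`. -/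
def thM (τ z : ℂ) : ℂ := Th 1 τ z ^ 2 - Th 0 τ z * Th 2 τ z

lemma isIdx_thM {τ : ℂ} (hτ : 0 < τ.im) : IsIdx 1 τ (thM τ) where
  diff := by
    have h0 := differentiable_Th 0 hτ
    have h1 := differentiable_Th 1 hτ
    have h2 := differentiable_Th 2 hτ
    unfold thM
    fun_prop
  add_one z := by simp only [thM, Th_add_one]; ring
  add_tau z := by
    rw [← efac_sq]
    simp only [thM, Th_add_tau_zero, Th_add_tau_one hτ, Th_add_tau_two hτ]
    ring

/-- `ϑ² ℘` with its removable singularities filled in. -/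
def thWp (τ : ℂ) (hτ : 0 < τ.im) (z : ℂ) : ℂ :=
  open Classical in
  if z ∈ (perPair τ hτ).lattice then Th 1 τ z ^ 2
  else Th 0 τ z ^ 2 * (perPair τ hτ).weierstrassP z

lemma wp_add {τ : ℂ} (hτ : 0 < τ.im) (z : ℂ) {l : ℂ} (hl : l ∈ (perPair τ hτ).lattice) :
    (perPair τ hτ).weierstrassP (z + l) = (perPair τ hτ).weierstrassP z :=
  (perPair τ hτ).weierstrassP_add_coe z ⟨l, hl⟩

lemma Th_factor {τ : ℂ} {l : ℂ} (hl : Th 0 τ l = 0) (z : ℂ) :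
    Th 0 τ z = (z - l) * dslope (Th 0 τ) l z := by
  have := sub_smul_dslope (Th 0 τ) l z
  rw [hl, sub_zero] at this
  exact this.symm

lemma differentiable_dslope {g : ℂ → ℂ} (hg : Differentiable ℂ g) (l : ℂ) :
    Differentiable ℂ (dslope g l) := by
  rw [← differentiableOn_univ, Complex.differentiableOn_dslope Filter.univ_mem,
    differentiableOn_univ]
  exact hg

lemma differentiableAt_wpExcept (L : PeriodPair) (l : ℂ) :
    DifferentiableAt ℂ (L.weierstrassPExcept l) l :=
  (L.differentiableOn_weierstrassPExcept l).differentiableAt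
    (L.compl_lattice_sdiff_singleton_mem_nhds l)

lemma differentiableAt_wp (L : PeriodPair) {z : ℂ} (hz : z ∉ L.lattice) :
    DifferentiableAt ℂ L.weierstrassP z :=
  L.differentiableOn_weierstrassP.differentiableAt (L.isClosed_lattice.isOpen_compl.mem_nhds hz)

lemma isIdx_thWp {τ : ℂ} (hτ : 0 < τ.im) : IsIdx 1 τ (thWp τ hτ) where
  diff := by
    intro z
    have h0 := differentiable_Th 0 hτ
    by_cases hz : z ∈ (perPair τ hτ).lattice
    · have hz0 := Th_lattice hτ z hz
      have hd := differentiable_dslope h0 z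
      have hw := differentiableAt_wpExcept (perPair τ hτ) z
      have hD : DifferentiableAt ℂ (fun w => Th 0 τ w ^ 2 *
          ((perPair τ hτ).weierstrassPExcept z w - 1 / z ^ 2) + dslope (Th 0 τ) z w ^ 2) z := by
        fun_prop
      refine hD.congr_of_eventuallyEq ?_
      filter_upwards [(perPair τ hτ).compl_lattice_sdiff_singleton_mem_nhds z] with w hw
      by_cases hwz : w = z
      · subst hwz
        rw [thWp, if_pos hz, hz0, dslope_same, (hasDerivAt_Th_z 0 hτ w).deriv]
        ring
      · have hwL : w ∉ (perPair τ hτ).lattice := fun h => hw ⟨h, hwz⟩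
        rw [thWp, if_neg hwL, ← (perPair τ hτ).weierstrassPExcept_add ⟨z, hz⟩, Th_factor hz0 w]
        have : w - z ≠ 0 := sub_ne_zero.mpr hwz
        field_simp
        ring
    · have hw := differentiableAt_wp (perPair τ hτ) hz
      have hD : DifferentiableAt ℂ
          (fun w => Th 0 τ w ^ 2 * (perPair τ hτ).weierstrassP w) z := by fun_prop
      refine hD.congr_of_eventuallyEq ?_
      filter_upwards [(perPair τ hτ).isClosed_lattice.isOpen_compl.mem_nhds hz] with w hw
      rw [thWp, if_neg (show w ∉ (perPair τ hτ).lattice from hw)]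
  add_one z := by
    rw [thWp, thWp, add_mem_cancel_right (one_mem hτ), Th_add_one, Th_add_one,
      wp_add hτ z (one_mem hτ), neg_sq, neg_sq]
  add_tau z := by
    rw [← efac_sq, thWp, thWp, add_mem_cancel_right (tau_mem hτ), wp_add hτ z (tau_mem hτ),
      Th_add_tau_zero]
    split_ifs with h
    · rw [Th_add_tau_one hτ, Th_lattice hτ z h]; ring
    · ring

/-- If `ϑ'(0)` vanished, then `ϑ` would have zeros of order at least three on the lattice,
so that `ϑ ℘` would be entire; as `ϑ²`, `ϑ·ϑ℘` and `(ϑ℘)²` are linearly dependent,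
`℘` would be constant. -/
lemma Th_one_ne_zero {τ : ℂ} (hτ : 0 < τ.im) : Th 1 τ 0 ≠ 0 := by
  intro hD
  have h0 := differentiable_Th 0 hτ
  have hlat : ∀ l ∈ (perPair τ hτ).lattice, Th 0 τ l = 0 ∧ Th 1 τ l = 0 ∧ Th 2 τ l = 0 := by
    refine lattice_induct hτ ⟨Th_even_zero Even.zero τ, hD, Th_even_zero even_two τ⟩ (fun z => ?_)
      (fun z => ?_)
    · simp only [Th_add_one, neg_eq_zero]
    · rw [Th_add_tau_zero, Th_add_tau_one hτ, Th_add_tau_two hτ]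
      simp only [mul_eq_zero, efac_ne_zero, false_or]
      constructor
      · rintro ⟨a, b, c⟩
        rw [a] at b c
        have b' : Th 1 τ z = 0 := by simpa using b
        rw [b'] at c
        exact ⟨a, b', by simpa using c⟩
      · rintro ⟨a, b, c⟩
        simp [a, b, c]
  set F : ℂ → ℂ := fun z => Th 0 τ z * (perPair τ hτ).weierstrassP z with hF
  have hFd : Differentiable ℂ F := by
    intro z
    by_cases hz : z ∈ (perPair τ hτ).lattice
    · obtain ⟨z0, z1, z2⟩ := hlat z hz
      have hd := differentiable_dslope h0 z
      have hdd := differentiable_dslope hd z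
      have hw := differentiableAt_wpExcept (perPair τ hτ) z
      have hs0 : dslope (Th 0 τ) z z = 0 := by
        rw [dslope_same, (hasDerivAt_Th_z 0 hτ z).deriv]; exact z1
      have hfac : ∀ w, Th 0 τ w = (w - z) ^ 2 * dslope (dslope (Th 0 τ) z) z w := by
        intro w
        have := sub_smul_dslope (dslope (Th 0 τ) z) z w
        rw [hs0, sub_zero, smul_eq_mul] at this
        rw [Th_factor z0 w, sq, mul_assoc, this]
      have hss : dslope (dslope (Th 0 τ) z) z z = 0 := by
        -- second derivative of `(w - z)² h(w)` at `z` is `2 h(z)`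
        set h := dslope (dslope (Th 0 τ) z) z with hh
        have e1 : ∀ w, HasDerivAt (Th 0 τ) (2 * (w - z) * h w + (w - z) ^ 2 * deriv h w) w := by
          intro w
          have := ((((hasDerivAt_id w).sub_const z).pow 2).mul (hdd w).hasDerivAt)
          rw [show Th 0 τ = (fun w => (w - z) ^ 2) * h from funext hfac]
          exact this.congr_deriv (by simp)
        have e2 : Th 1 τ = fun w => 2 * (w - z) * h w + (w - z) ^ 2 * deriv h w :=
          funext fun w => (hasDerivAt_Th_z 0 hτ w).unique (e1 w)
        have e3 := hasDerivAt_Th_z 1 hτ z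
        rw [e2] at e3
        have e4 : HasDerivAt (fun w => 2 * (w - z) * h w + (w - z) ^ 2 * deriv h w)
            (2 * h z) z := by
          have hdh : DifferentiableAt ℂ (deriv h) z :=
            (hdd.analyticAt z).deriv.differentiableAt
          have := ((((hasDerivAt_id z).sub_const z).const_mul 2).mul (hdd z).hasDerivAt).add
            ((((hasDerivAt_id z).sub_const z).pow 2).mul hdh.hasDerivAt)
          exact this.congr_deriv (by simp)
        have := e3.unique e4
        rw [z2] at this
        simpa using this.symm
      have hD' : DifferentiableAt ℂ (fun w => Th 0 τ w *
          ((perPair τ hτ).weierstrassPExcept z w - 1 / z ^ 2) +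
            dslope (dslope (Th 0 τ) z) z w) z := by fun_prop
      refine hD'.congr_of_eventuallyEq ?_
      filter_upwards with w
      by_cases hwz : w = z
      · subst hwz
        simp only [hF, z0, hss]; ring
      · have : w - z ≠ 0 := sub_ne_zero.mpr hwz
        simp only [hF]
        rw [← (perPair τ hτ).weierstrassPExcept_add ⟨z, hz⟩]
        simp only [hfac w]
        field_simp
        ring
    · have hw := differentiableAt_wp (perPair τ hτ) hz
      fun_prop
  have hI : ∀ i : Fin 3, IsIdx 1 τ
      ((![fun z => Th 0 τ z ^ 2, fun z => Th 0 τ z * F z, fun z => F z ^ 2] : Fin 3 → ℂ → ℂ) i) := by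
    have f1 : ∀ z, F (z + 1) = - F z := fun z => by
      simp only [hF, Th_add_one, wp_add hτ z (one_mem hτ)]; ring
    have f2 : ∀ z, F (z + τ) = efac τ z * F z := fun z => by
      simp only [hF, Th_add_tau_zero, wp_add hτ z (tau_mem hτ)]; ring
    intro i
    fin_cases i
    · exact isIdx_sq hτ
    · exact ⟨h0.mul hFd, fun z => by simp [f1, Th_add_one],
        fun z => by
          change Th 0 τ (z + τ) * F (z + τ) = _ * (Th 0 τ z * F z)
          rw [f2, Th_add_tau_zero, ← efac_sq]; ring⟩
    · exact ⟨hFd.pow 2, fun z => by simp [f1], fun z => by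
        change F (z + τ) ^ 2 = _ * F z ^ 2
        rw [f2, ← efac_sq]; ring⟩
  obtain ⟨a, ha, hz⟩ := idx1_dep hI
  simp only [Fin.sum_univ_three, Matrix.cons_val_zero, Matrix.cons_val_one, Matrix.cons_val] at hz
  have hne := Th_zero_ne hτ
  -- the dependency forces `F = r ϑ` for some constant `r`
  have hr : ∃ r : ℂ, ∀ z, F z - r * Th 0 τ z = 0 := by
    by_cases hc : a 2 = 0
    · have h1 := entire_cancel h0 (G := fun z => a 0 * Th 0 τ z + a 1 * F z) (by fun_prop) hne
        (fun z => by have := hz z; rw [hc] at this; linear_combination this)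
      have hb : a 1 ≠ 0 := by
        intro hb
        have h00 : a 0 = 0 := by
          obtain ⟨z, hz'⟩ := hne
          have := h1 z
          simpa [hb, hz'] using this
        apply ha
        ext i
        fin_cases i <;> simp [h00, hb, hc]
      refine ⟨-(a 0 / a 1), fun z => ?_⟩
      have := h1 z
      field_simp
      linear_combination this
    · obtain ⟨s, hs⟩ := IsAlgClosed.exists_pow_nat_eq (a 1 ^ 2 - 4 * a 2 * a 0) two_pos
      set r1 := (-a 1 + s) / (2 * a 2) with hr1
      set r2 := (-a 1 - s) / (2 * a 2) with hr2
      by_cases hG : ∃ z, F z - r1 * Th 0 τ z ≠ 0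
      · refine ⟨r2, entire_cancel (F := fun z => F z - r1 * Th 0 τ z) (by fun_prop) (by fun_prop) hG
          fun z => ?_⟩
        have := hz z
        rw [hr1, hr2]
        field_simp
        linear_combination 4 * a 2 * this - Th 0 τ z ^ 2 * hs
      · push Not at hG
        exact ⟨r1, hG⟩
  obtain ⟨r, hr⟩ := hr
  have hev : ∀ᶠ z in nhdsWithin (0 : ℂ) {0}ᶜ, Th 0 τ z ≠ 0 := by
    rcases (h0.analyticAt 0).eventually_eq_zero_or_eventually_ne_zero with h | h
    · exfalso
      have han : AnalyticOnNhd ℂ (Th 0 τ) Set.univ := fun z _ => h0.analyticAt z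
      have := han.eqOn_zero_of_preconnected_of_eventuallyEq_zero isPreconnected_univ
        (Set.mem_univ 0) h
      obtain ⟨z, hz'⟩ := hne
      exact hz' (this (Set.mem_univ z))
    · exact h
  have hc : ContinuousAt ((perPair τ hτ).weierstrassPExcept 0) 0 :=
    (differentiableAt_wpExcept (perPair τ hτ) 0).continuousAt
  have ht1 : Filter.Tendsto (fun z : ℂ => z ^ 2 * (r - (perPair τ hτ).weierstrassPExcept 0 z))
      (nhdsWithin 0 {0}ᶜ) (nhds 0) := by
    have : ContinuousAt (fun z : ℂ => z ^ 2 * (r - (perPair τ hτ).weierstrassPExcept 0 z)) 0 := by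
      fun_prop
    have := this.tendsto
    simp only [ne_eq, OfNat.ofNat_ne_zero, not_false_eq_true, zero_pow, zero_mul] at this
    exact this.mono_left nhdsWithin_le_nhds
  have ht2 : Filter.Tendsto (fun z : ℂ => z ^ 2 * (r - (perPair τ hτ).weierstrassPExcept 0 z))
      (nhdsWithin 0 {0}ᶜ) (nhds 1) := by
    refine tendsto_const_nhds.congr' ?_
    filter_upwards [hev, self_mem_nhdsWithin] with z hz' hz0
    have h1 := hr z
    simp only [hF] at h1
    have h2 : (perPair τ hτ).weierstrassP z = r := by
      have : Th 0 τ z * ((perPair τ hτ).weierstrassP z - r) = 0 := by linear_combination h1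
      exact sub_eq_zero.mp ((mul_eq_zero.mp this).resolve_left hz')
    have h3 := (perPair τ hτ).weierstrassPExcept_add ⟨0, zero_mem _⟩ z
    simp only [sub_zero] at h3
    rw [← h2, ← h3]
    have : z ≠ 0 := hz0
    field_simp
    simp
  exact zero_ne_one (tendsto_nhds_unique ht1 ht2)

/-! ### The Weierstrass equation and the duplication formula for `ϑ` -/

lemma exists_eC {τ : ℂ} (hτ : 0 < τ.im) :
    ∃ e : ℂ, ∀ z, thM τ z = thWp τ hτ z + e * Th 0 τ z ^ 2 := by
  have hI : ∀ i : Fin 3, IsIdx 1 τ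
      ((![fun z => Th 0 τ z ^ 2, thWp τ hτ, thM τ] : Fin 3 → ℂ → ℂ) i) := by
    intro i
    fin_cases i
    · exact isIdx_sq hτ
    · exact isIdx_thWp hτ
    · exact isIdx_thM hτ
  obtain ⟨a, ha, hz⟩ := idx1_dep hI
  simp only [Fin.sum_univ_three, Matrix.cons_val_zero, Matrix.cons_val_one, Matrix.cons_val] at hz
  have hD := Th_one_ne_zero hτ
  have h12 : a 1 = - a 2 := by
    have h := hz 0
    rw [thWp, if_pos (zero_mem _), thM, Th_even_zero Even.zero τ] at h
    have : Th 1 τ 0 ^ 2 * (a 1 + a 2) = 0 := by linear_combination h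
    exact eq_neg_of_add_eq_zero_left ((mul_eq_zero.mp this).resolve_left (pow_ne_zero 2 hD))
  have h2 : a 2 ≠ 0 := by
    intro h2
    apply ha
    have h0 : a 0 = 0 := by
      obtain ⟨z, hz'⟩ := Th_zero_ne hτ
      have := hz z
      simpa [h12, h2, hz'] using this
    ext i
    fin_cases i <;> simp [h0, h12, h2]
  refine ⟨-(a 0 / a 2), fun z => ?_⟩
  have := hz z
  rw [h12] at this
  field_simp
  linear_combination this

/-- The constant `e(τ)` with `-(log ϑ)'' = ℘ + e`; it turns out to be `(π²/3) E₂(τ)`. -/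
def eC (τ : ℂ) : ℂ := open Classical in if h : 0 < τ.im then (exists_eC h).choose else 0

lemma eC_spec {τ : ℂ} (hτ : 0 < τ.im) (z : ℂ) :
    thM τ z = thWp τ hτ z + eC τ * Th 0 τ z ^ 2 := by
  rw [eC, dif_pos hτ]
  exact (exists_eC hτ).choose_spec z

/-- The invariant `g₂` of the lattice `ℤ + ℤτ`. -/
def g2C (τ : ℂ) : ℂ := open Classical in if h : 0 < τ.im then (perPair τ h).g₂ else 0

/-- The invariant `g₃` of the lattice `ℤ + ℤτ`. -/
def g3C (τ : ℂ) : ℂ := open Classical in if h : 0 < τ.im then (perPair τ h).g₃ else 0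

/-- `ϑ² ℘`, as a polynomial in `e` and the derivatives of `ϑ`. -/
def thA (τ z : ℂ) : ℂ := thM τ z - eC τ * Th 0 τ z ^ 2

/-- `ϑ³ ℘'`, as a polynomial in the derivatives of `ϑ`. -/
def thN (τ z : ℂ) : ℂ :=
  -(Th 0 τ z ^ 2 * Th 3 τ z - 3 * Th 0 τ z * Th 1 τ z * Th 2 τ z + 2 * Th 1 τ z ^ 3)

/-- The `z`-derivative of `thA`. -/
def thA' (τ z : ℂ) : ℂ :=
  Th 1 τ z * Th 2 τ z - Th 0 τ z * Th 3 τ z - 2 * eC τ * Th 0 τ z * Th 1 τ z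

/-- The `z`-derivative of `thN`. -/
def thN' (τ z : ℂ) : ℂ :=
  -(Th 0 τ z ^ 2 * Th 4 τ z - Th 0 τ z * Th 1 τ z * Th 3 τ z + 3 * Th 1 τ z ^ 2 * Th 2 τ z
    - 3 * Th 0 τ z * Th 2 τ z ^ 2)

lemma hasDerivAt_thA {τ : ℂ} (hτ : 0 < τ.im) (z : ℂ) : HasDerivAt (thA τ) (thA' τ z) z := by
  have h0 := hasDerivAt_Th_z 0 hτ z
  have h1 := hasDerivAt_Th_z 1 hτ z
  have h2 := hasDerivAt_Th_z 2 hτ z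
  have := ((h1.pow 2).sub (h0.mul h2)).sub ((h0.pow 2).const_mul (eC τ))
  refine HasDerivAt.congr_deriv (f := thA τ) this ?_
  simp [thA']
  ring

lemma hasDerivAt_thN {τ : ℂ} (hτ : 0 < τ.im) (z : ℂ) : HasDerivAt (thN τ) (thN' τ z) z := by
  have h0 := hasDerivAt_Th_z 0 hτ z
  have h1 := hasDerivAt_Th_z 1 hτ z
  have h2 := hasDerivAt_Th_z 2 hτ z
  have h3 := hasDerivAt_Th_z 3 hτ z
  have := ((((h0.pow 2).mul h3).sub (((h0.const_mul 3).mul h1).mul h2)).add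
    ((h1.pow 3).const_mul 2)).neg
  refine HasDerivAt.congr_deriv (f := thN τ) this ?_
  simp [thN']
  ring

lemma differentiable_thA {τ : ℂ} (hτ : 0 < τ.im) : Differentiable ℂ (thA τ) :=
  fun z => (hasDerivAt_thA hτ z).differentiableAt

lemma differentiable_thN {τ : ℂ} (hτ : 0 < τ.im) : Differentiable ℂ (thN τ) :=
  fun z => (hasDerivAt_thN hτ z).differentiableAt

lemma differentiable_thN' {τ : ℂ} (hτ : 0 < τ.im) : Differentiable ℂ (thN' τ) := by
  have h0 := differentiable_Th 0 hτ
  have h1 := differentiable_Th 1 hτ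
  have h2 := differentiable_Th 2 hτ
  have h3 := differentiable_Th 3 hτ
  have h4 := differentiable_Th 4 hτ
  unfold thN'
  fun_prop

/-- The Weierstrass equation, cleared of denominators. -/
lemma weier {τ : ℂ} (hτ : 0 < τ.im) (z : ℂ) :
    thN τ z ^ 2 = 4 * thA τ z ^ 3 - g2C τ * thA τ z * Th 0 τ z ^ 4 - g3C τ * Th 0 τ z ^ 6 := by
  have h0 := differentiable_Th 0 hτ
  have hA := differentiable_thA hτ
  have hN := differentiable_thN hτ
  suffices h : ∀ z, thN τ z ^ 2 -
      (4 * thA τ z ^ 3 - g2C τ * thA τ z * Th 0 τ z ^ 4 - g3C τ * Th 0 τ z ^ 6) = 0 from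
    sub_eq_zero.mp (h z)
  refine entire_cancel h0 (by fun_prop) (Th_zero_ne hτ) fun z => ?_
  by_cases hz : Th 0 τ z = 0
  · rw [hz, zero_mul]
  refine mul_eq_zero_of_right _ ?_
  set L := perPair τ hτ with hL
  have hzL : z ∉ L.lattice := notMem_of_Th_ne hτ hz
  have hwp : ∀ w, Th 0 τ w ≠ 0 → L.weierstrassP w = thA τ w / Th 0 τ w ^ 2 := by
    intro w hw
    have := eC_spec hτ w
    rw [thWp, if_neg (notMem_of_Th_ne hτ hw)] at this
    rw [thA, this]
    field_simp
    ring
  have hev : L.weierstrassP =ᶠ[nhds z] fun w => thA τ w / Th 0 τ w ^ 2 := by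
    filter_upwards [h0.continuous.continuousAt.eventually_ne hz] with w hw
    exact hwp w hw
  have hder : L.derivWeierstrassP z = thN τ z / Th 0 τ z ^ 3 := by
    rw [← L.deriv_weierstrassP, hev.deriv_eq]
    have := (hasDerivAt_thA hτ z).div ((hasDerivAt_Th_z 0 hτ z).pow 2) (pow_ne_zero 2 hz)
    refine HasDerivAt.deriv (HasDerivAt.congr_deriv this ?_)
    simp only [thA', thA, thM, thN, Pi.pow_apply]
    field_simp
    norm_num
    ring
  have hw := L.derivWeierstrassP_sq z hzL
  rw [hder, hwp z hz] at hw
  have e2 : g2C τ = L.g₂ := by rw [g2C, dif_pos hτ]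
  have e3 : g3C τ = L.g₃ := by rw [g3C, dif_pos hτ]
  rw [e2, e3]
  field_simp at hw
  linear_combination hw

lemma thA_zero (τ : ℂ) : thA τ 0 = Th 1 τ 0 ^ 2 := by
  rw [thA, thM, Th_even_zero Even.zero τ]; ring

lemma thN_zero (τ : ℂ) : thN τ 0 = -2 * Th 1 τ 0 ^ 3 := by
  rw [thN, Th_even_zero Even.zero τ]; ring

lemma thN_ne {τ : ℂ} (hτ : 0 < τ.im) : ∃ z, thN τ z ≠ 0 :=
  ⟨0, by rw [thN_zero]; simp [Th_one_ne_zero hτ]⟩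

lemma thN_eq (τ z : ℂ) : thA' τ z * Th 0 τ z - 2 * thA τ z * Th 1 τ z = thN τ z := by
  simp only [thA', thA, thM, thN]; ring

lemma weier_deriv {τ : ℂ} (hτ : 0 < τ.im) (z : ℂ) :
    2 * thN τ z * thN' τ z = 12 * thA τ z ^ 2 * thA' τ z - g2C τ * (thA' τ z * Th 0 τ z ^ 4
      + 4 * thA τ z * Th 0 τ z ^ 3 * Th 1 τ z) - 6 * g3C τ * Th 0 τ z ^ 5 * Th 1 τ z := by
  have h0 := hasDerivAt_Th_z 0 hτ z
  have hA := hasDerivAt_thA hτ z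
  have hN := hasDerivAt_thN hτ z
  have h1 := hN.pow 2
  have h2 := (((hA.pow 3).const_mul 4).sub ((hA.const_mul (g2C τ)).mul (h0.pow 4))).sub
    ((h0.pow 6).const_mul (g3C τ))
  have := h1.unique (HasDerivAt.congr_of_eventuallyEq h2 (Filter.Eventually.of_forall
    fun w => weier hτ w))
  simp at this
  linear_combination this

/-- `℘'' = 6℘² - g₂/2`, cleared of denominators. -/
lemma weier_two {τ : ℂ} (hτ : 0 < τ.im) (z : ℂ) :
    Th 0 τ z * thN' τ z = 3 * Th 1 τ z * thN τ z + 6 * thA τ z ^ 2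
      - g2C τ / 2 * Th 0 τ z ^ 4 := by
  have h0 := differentiable_Th 0 hτ
  have h1 := differentiable_Th 1 hτ
  have hA := differentiable_thA hτ
  have hN := differentiable_thN hτ
  have hN' := differentiable_thN' hτ
  suffices h : ∀ z, Th 0 τ z * thN' τ z - (3 * Th 1 τ z * thN τ z + 6 * thA τ z ^ 2
      - g2C τ / 2 * Th 0 τ z ^ 4) = 0 from sub_eq_zero.mp (h z)
  refine entire_cancel hN (by fun_prop) (thN_ne hτ) fun z => ?_
  have e1 := weier hτ z
  have e2 := weier_deriv hτ z
  have e3 := thN_eq τ z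
  linear_combination (Th 0 τ z / 2) * e2 - 3 * Th 1 τ z * e1 +
    (6 * thA τ z ^ 2 - g2C τ / 2 * Th 0 τ z ^ 4) * e3

/-- The cubic Taylor coefficient of `ϑ` at `0`: comparing second derivatives at `0` in the
Weierstrass equation. -/
lemma Th_three_zero {τ : ℂ} (hτ : 0 < τ.im) : Th 3 τ 0 = -3 * eC τ * Th 1 τ 0 := by
  have h0 := hasDerivAt_Th_z 0 hτ 0
  have h1 := hasDerivAt_Th_z 1 hτ 0
  have h2 := hasDerivAt_Th_z 2 hτ 0
  have h3 := hasDerivAt_Th_z 3 hτ 0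
  have h4 := hasDerivAt_Th_z 4 hτ 0
  have z0 : Th 0 τ 0 = 0 := Th_even_zero Even.zero τ
  have z2 : Th 2 τ 0 = 0 := Th_even_zero even_two τ
  have hA := hasDerivAt_thA hτ 0
  have hN := hasDerivAt_thN hτ 0
  have hD := Th_one_ne_zero hτ
  have hA' : HasDerivAt (thA' τ) (-2 * eC τ * Th 1 τ 0 ^ 2) 0 := by
    have := ((h1.mul h2).sub (h0.mul h3)).sub ((h0.const_mul (2 * eC τ)).mul h1)
    refine HasDerivAt.congr_deriv (f := thA' τ) this ?_
    simp [z0, z2]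
    ring
  have hN' : HasDerivAt (thN' τ) (-2 * Th 1 τ 0 ^ 2 * Th 3 τ 0) 0 := by
    have := (((((h0.pow 2).mul h4).sub ((h0.mul h1).mul h3)).add
      (((h1.pow 2).const_mul 3).mul h2)).sub ((h0.const_mul 3).mul (h2.pow 2))).neg
    refine HasDerivAt.congr_deriv (f := thN' τ) this ?_
    simp [z0, z2]
    ring
  have d1 := (hN.const_mul 2).mul hN'
  have d2 := ((((hA.pow 2).const_mul 12).mul hA').sub (((hA'.mul (h0.pow 4)).add
    (((hA.const_mul 4).mul (h0.pow 3)).mul h1)).const_mul (g2C τ))).sub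
      (((h0.pow 5).const_mul (6 * g3C τ)).mul h1)
  have := d1.unique (HasDerivAt.congr_of_eventuallyEq d2 (Filter.Eventually.of_forall
    fun w => weier_deriv hτ w))
  have a1 : thA' τ 0 = 0 := by simp [thA', z0, z2]
  have n1 : thN' τ 0 = 0 := by simp [thN', z0, z2]
  simp [z0, a1, n1, thA_zero, thN_zero] at this
  have h5 : Th 1 τ 0 ^ 5 * (Th 3 τ 0 + 3 * eC τ * Th 1 τ 0) = 0 := by
    linear_combination (1 / 8) * this
  linear_combination (mul_eq_zero.mp h5).resolve_left (pow_ne_zero 5 hD)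

/-- The duplication formula `ϑ'(0)³ ϑ(2z) = -ϑ(z)⁴ ℘'(z)`. -/
lemma dup {τ : ℂ} (hτ : 0 < τ.im) (z : ℂ) :
    Th 1 τ 0 ^ 3 * Th 0 τ (2 * z) = - (Th 0 τ z * thN τ z) := by
  have h0 := differentiable_Th 0 hτ
  have hN := differentiable_thN hτ
  have hD := Th_one_ne_zero hτ
  have e2 : ∀ z : ℂ, efac τ z ^ 4 = Complex.exp (-(2 * π * I * (2 : ℕ) * (2 * z + τ))) := by
    intro z
    rw [show efac τ z ^ 4 = (efac τ z ^ 2) ^ 2 by ring, efac_sq, ← Complex.exp_nat_mul]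
    congr 1; push_cast; ring
  have i1 : IsIdx 2 τ (fun z => Th 0 τ (2 * z)) := by
    refine ⟨by fun_prop, fun z => ?_, fun z => ?_⟩
    · rw [show 2 * (z + 1) = 2 * z + 1 + 1 by ring, Th_add_one, Th_add_one, neg_neg]
    · rw [show 2 * (z + τ) = 2 * z + τ + τ by ring, Th_add_tau_zero, Th_add_tau_zero,
        ← mul_assoc]
      congr 1
      rw [efac, efac, neg_mul_neg, ← Complex.exp_add]
      congr 1; push_cast; ring
  have i2 : IsIdx 2 τ (fun z => Th 0 τ z * thN τ z) := by
    refine ⟨by fun_prop, fun z => ?_, fun z => ?_⟩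
    · simp only [thN, Th_add_one]; ring
    · rw [← e2]
      simp only [thN, Th_add_tau_zero, Th_add_tau_one hτ, Th_add_tau_two hτ, Th_add_tau_three hτ]
      ring
  obtain ⟨a, b, hab, h⟩ := odd_idx2_prop i1 i2
    (fun z => by rw [mul_neg, Th_neg]; ring) (fun z => by simp only [thN, Th_neg]; ring)
  -- compare derivatives at `0`
  have hd : HasDerivAt (fun z => a * Th 0 τ (2 * z) + b * (Th 0 τ z * thN τ z))
      (a * (2 * Th 1 τ 0) + b * (Th 1 τ 0 * thN τ 0)) 0 := by
    have k1 : HasDerivAt (fun z => Th 0 τ (2 * z)) (2 * Th 1 τ 0) 0 := by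
      have q := hasDerivAt_Th_z 0 hτ (2 * 0)
      have := HasDerivAt.comp (0 : ℂ) q ((hasDerivAt_id (0 : ℂ)).const_mul 2)
      refine HasDerivAt.congr_deriv this ?_
      simp; ring
    have k2 := (hasDerivAt_Th_z 0 hτ 0).mul (hasDerivAt_thN hτ 0)
    have := (k1.const_mul a).add (k2.const_mul b)
    refine HasDerivAt.congr_deriv this ?_
    simp [Th_even_zero Even.zero τ]
  have hd0 : a * (2 * Th 1 τ 0) + b * (Th 1 τ 0 * thN τ 0) = 0 := by
    refine hd.unique ?_
    rw [show (fun z => a * Th 0 τ (2 * z) + b * (Th 0 τ z * thN τ z)) = fun _ => 0 from funext h]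
    exact hasDerivAt_const _ _
  rw [thN_zero] at hd0
  have ha : a = b * Th 1 τ 0 ^ 3 := by
    have : Th 1 τ 0 * (a - b * Th 1 τ 0 ^ 3) = 0 := by linear_combination (1 / 2) * hd0
    exact sub_eq_zero.mp ((mul_eq_zero.mp this).resolve_left hD)
  have hb : b ≠ 0 := by
    rintro rfl
    simp at ha
    simp [ha] at hab
  have := h z
  rw [ha] at this
  have h6 : b * (Th 1 τ 0 ^ 3 * Th 0 τ (2 * z) + Th 0 τ z * thN τ z) = 0 := by
    linear_combination this
  linear_combination (mul_eq_zero.mp h6).resolve_left hb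

/-! ### `℘` and its derivative as theta quotients, and Ramanujan's equations -/

/-- The logarithmic derivative `ϑ_z / ϑ`. -/
def fJ (τ z : ℂ) : ℂ := Th 1 τ z / Th 0 τ z

/-- The Weierstrass function `℘` expressed through `ϑ`. -/
def fP (τ z : ℂ) : ℂ := thA τ z / Th 0 τ z ^ 2

/-- The derivative `℘'` expressed through `ϑ`. -/
def fQ (τ z : ℂ) : ℂ := thN τ z / Th 0 τ z ^ 3

section zderiv

variable {τ z : ℂ}

lemma hasDerivAt_fJ (hτ : 0 < τ.im) (hz : Th 0 τ z ≠ 0) :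
    HasDerivAt (fJ τ) (-(fP τ z + eC τ)) z := by
  have := (hasDerivAt_Th_z 1 hτ z).div (hasDerivAt_Th_z 0 hτ z) hz
  refine HasDerivAt.congr_deriv (f := fJ τ) this ?_
  simp only [fP, thA, thM]
  field_simp
  ring

lemma hasDerivAt_fP (hτ : 0 < τ.im) (hz : Th 0 τ z ≠ 0) : HasDerivAt (fP τ) (fQ τ z) z := by
  have := (hasDerivAt_thA hτ z).div ((hasDerivAt_Th_z 0 hτ z).pow 2) (pow_ne_zero 2 hz)
  refine HasDerivAt.congr_deriv (f := fP τ) this ?_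
  simp only [fQ, ← thN_eq, Pi.pow_apply]
  field_simp
  norm_num
  ring

lemma hasDerivAt_fQ (hτ : 0 < τ.im) (hz : Th 0 τ z ≠ 0) :
    HasDerivAt (fQ τ) (6 * fP τ z ^ 2 - g2C τ / 2) z := by
  have := (hasDerivAt_thN hτ z).div ((hasDerivAt_Th_z 0 hτ z).pow 3) (pow_ne_zero 3 hz)
  refine HasDerivAt.congr_deriv (f := fQ τ) this ?_
  have h := weier_two hτ z
  simp only [fP, Pi.pow_apply]
  field_simp
  norm_num
  linear_combination 2 * Th 0 τ z ^ 2 * h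

lemma fweier (hτ : 0 < τ.im) (hz : Th 0 τ z ≠ 0) :
    fQ τ z ^ 2 = 4 * fP τ z ^ 3 - g2C τ * fP τ z - g3C τ := by
  have h := weier hτ z
  simp only [fP, fQ]
  field_simp
  linear_combination h

lemma Th_one_eq (hz : Th 0 τ z ≠ 0) : Th 1 τ z = Th 0 τ z * fJ τ z := by
  rw [fJ]; field_simp

lemma Th_two_eq (hz : Th 0 τ z ≠ 0) :
    Th 2 τ z = Th 0 τ z * (fJ τ z ^ 2 - (fP τ z + eC τ)) := by
  simp only [fJ, fP, thA, thM]; field_simp; ring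

lemma Th_three_eq (hz : Th 0 τ z ≠ 0) :
    Th 3 τ z = Th 0 τ z * (fJ τ z ^ 3 - 3 * fJ τ z * (fP τ z + eC τ) - fQ τ z) := by
  simp only [fJ, fP, fQ, thA, thM, thN]; field_simp; ring

lemma eventually_ne_z (hτ : 0 < τ.im) (hz : Th 0 τ z ≠ 0) : ∀ᶠ w in nhds z, Th 0 τ w ≠ 0 :=
  (differentiable_Th 0 hτ).continuous.continuousAt.eventually_ne hz

lemma Th_four_eq (hτ : 0 < τ.im) (hz : Th 0 τ z ≠ 0) :
    Th 4 τ z = Th 0 τ z * (fJ τ z ^ 4 - 6 * fJ τ z ^ 2 * (fP τ z + eC τ) - 4 * fJ τ z * fQ τ z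
      + 3 * (fP τ z + eC τ) ^ 2 - (6 * fP τ z ^ 2 - g2C τ / 2)) := by
  have h0 := hasDerivAt_Th_z 0 hτ z
  have hJ := hasDerivAt_fJ hτ hz
  have hP := hasDerivAt_fP hτ hz
  have hQ := hasDerivAt_fQ hτ hz
  have h := h0.mul (((hJ.pow 3).sub ((hJ.const_mul 3).mul (hP.add_const (eC τ)))).sub hQ)
  have := (hasDerivAt_Th_z 3 hτ z).unique (h.congr_of_eventuallyEq (by
    filter_upwards [eventually_ne_z hτ hz] with w hw
    exact Th_three_eq hw))
  simp at this
  rw [this, Th_one_eq hz]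
  ring

lemma Th_five_eq (hτ : 0 < τ.im) (hz : Th 0 τ z ≠ 0) :
    Th 5 τ z = Th 0 τ z * (fJ τ z ^ 5 - 10 * fJ τ z ^ 3 * (fP τ z + eC τ)
      - 10 * fJ τ z ^ 2 * fQ τ z + 15 * fJ τ z * (fP τ z + eC τ) ^ 2
      - 5 * fJ τ z * (6 * fP τ z ^ 2 - g2C τ / 2) + 10 * (fP τ z + eC τ) * fQ τ z
      - 12 * fP τ z * fQ τ z) := by
  have h0 := hasDerivAt_Th_z 0 hτ z
  have hJ := hasDerivAt_fJ hτ hz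
  have hP := hasDerivAt_fP hτ hz
  have hQ := hasDerivAt_fQ hτ hz
  have hR := hP.add_const (eC τ)
  have h := h0.mul (((((hJ.pow 4).sub (((hJ.pow 2).const_mul 6).mul hR)).sub
    ((hJ.const_mul 4).mul hQ)).add ((hR.pow 2).const_mul 3)).sub
      (((hP.pow 2).const_mul 6).sub_const (g2C τ / 2)))
  have := (hasDerivAt_Th_z 4 hτ z).unique (h.congr_of_eventuallyEq (by
    filter_upwards [eventually_ne_z hτ hz] with w hw
    exact Th_four_eq hτ hw))
  simp at this
  rw [this, Th_one_eq hz]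
  ring

end zderiv

lemma kap_ne : kap ≠ 0 := by
  simp [kap, Real.pi_ne_zero]

lemma eventually_im {τ : ℂ} (hτ : 0 < τ.im) : ∀ᶠ t in nhds τ, 0 < t.im :=
  Complex.continuous_im.continuousAt.eventually (lt_mem_nhds hτ)

lemma differentiableAt_Th_tau (k : ℕ) {τ : ℂ} (hτ : 0 < τ.im) (z : ℂ) :
    DifferentiableAt ℂ (fun t => Th k t z) τ := (hasDerivAt_Th_tau k hτ z).differentiableAt

lemma eventually_ne_tau {τ z : ℂ} (hτ : 0 < τ.im) (hz : Th 0 τ z ≠ 0) :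
    ∀ᶠ t in nhds τ, 0 < t.im ∧ Th 0 t z ≠ 0 :=
  (eventually_im hτ).and ((differentiableAt_Th_tau 0 hτ z).continuousAt.eventually_ne hz)

/-- `-(log ϑ)'' = ℘ + e` as a rational function of the derivatives of `ϑ`. -/
def fR (τ z : ℂ) : ℂ := thM τ z / Th 0 τ z ^ 2

lemma fR_eq {τ z : ℂ} (hz : Th 0 τ z ≠ 0) : fR τ z = fP τ z + eC τ := by
  simp only [fR, fP, thA]; field_simp; ring

/-- `℘''` as a rational function of the derivatives of `ϑ`. -/
def fS (τ z : ℂ) : ℂ := fJ τ z ^ 4 - 6 * fJ τ z ^ 2 * fR τ z - 4 * fJ τ z * fQ τ z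
      + 3 * fR τ z ^ 2 - Th 4 τ z / Th 0 τ z

lemma fS_eq {τ z : ℂ} (hτ : 0 < τ.im) (hz : Th 0 τ z ≠ 0) :
    fS τ z = 6 * fP τ z ^ 2 - g2C τ / 2 := by
  rw [fS, Th_four_eq hτ hz, fR_eq hz]; field_simp; ring

/-- `℘ = ℘'''/(12 ℘')` as a rational function of the derivatives of `ϑ`. -/
def fPP (τ z : ℂ) : ℂ := (fJ τ z ^ 5 - 10 * fJ τ z ^ 3 * fR τ z
      - 10 * fJ τ z ^ 2 * fQ τ z + 15 * fJ τ z * fR τ z ^ 2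
      - 5 * fJ τ z * fS τ z + 10 * fR τ z * fQ τ z - Th 5 τ z / Th 0 τ z) / (12 * fQ τ z)

lemma fPP_eq {τ z : ℂ} (hτ : 0 < τ.im) (hz : Th 0 τ z ≠ 0) (hQ : fQ τ z ≠ 0) :
    fPP τ z = fP τ z := by
  rw [fPP, fS_eq hτ hz, Th_five_eq hτ hz, fR_eq hz]; field_simp; ring

lemma exists_good {τ : ℂ} (hτ : 0 < τ.im) : ∃ z, Th 0 τ z ≠ 0 ∧ fQ τ z ≠ 0 := by
  by_contra! h
  obtain ⟨z, hz⟩ := thN_ne hτ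
  refine hz (entire_cancel (differentiable_Th 0 hτ) (differentiable_thN hτ) (Th_zero_ne hτ)
    (fun z => ?_) z)
  by_cases h0 : Th 0 τ z = 0
  · simp [h0]
  · have := h z h0
    rw [fQ, div_eq_zero_iff] at this
    rw [this.resolve_right (pow_ne_zero 3 h0), mul_zero]

section taudiff

variable {τ z : ℂ}

lemma diff_tau_fJ (hτ : 0 < τ.im) (hz : Th 0 τ z ≠ 0) :
    DifferentiableAt ℂ (fun t => fJ t z) τ := by
  have h0 := differentiableAt_Th_tau 0 hτ z
  have h1 := differentiableAt_Th_tau 1 hτ z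
  unfold fJ
  fun_prop (disch := assumption)

lemma diff_tau_fR (hτ : 0 < τ.im) (hz : Th 0 τ z ≠ 0) :
    DifferentiableAt ℂ (fun t => fR t z) τ := by
  have h0 := differentiableAt_Th_tau 0 hτ z
  have h1 := differentiableAt_Th_tau 1 hτ z
  have h2 := differentiableAt_Th_tau 2 hτ z
  have := pow_ne_zero 2 hz
  unfold fR thM
  fun_prop (disch := assumption)

lemma diff_tau_fQ (hτ : 0 < τ.im) (hz : Th 0 τ z ≠ 0) :
    DifferentiableAt ℂ (fun t => fQ t z) τ := by
  have h0 := differentiableAt_Th_tau 0 hτ z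
  have h1 := differentiableAt_Th_tau 1 hτ z
  have h2 := differentiableAt_Th_tau 2 hτ z
  have h3 := differentiableAt_Th_tau 3 hτ z
  have := pow_ne_zero 3 hz
  unfold fQ thN
  fun_prop (disch := assumption)

lemma diff_tau_fS (hτ : 0 < τ.im) (hz : Th 0 τ z ≠ 0) :
    DifferentiableAt ℂ (fun t => fS t z) τ := by
  have h0 := differentiableAt_Th_tau 0 hτ z
  have h4 := differentiableAt_Th_tau 4 hτ z
  have := diff_tau_fJ hτ hz
  have := diff_tau_fR hτ hz
  have := diff_tau_fQ hτ hz
  unfold fS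
  fun_prop (disch := assumption)

lemma diff_tau_fPP (hτ : 0 < τ.im) (hz : Th 0 τ z ≠ 0) (hQ : fQ τ z ≠ 0) :
    DifferentiableAt ℂ (fun t => fPP t z) τ := by
  have h0 := differentiableAt_Th_tau 0 hτ z
  have h5 := differentiableAt_Th_tau 5 hτ z
  have := diff_tau_fJ hτ hz
  have := diff_tau_fR hτ hz
  have := diff_tau_fQ hτ hz
  have := diff_tau_fS hτ hz
  have : 12 * fQ τ z ≠ 0 := mul_ne_zero (by norm_num) hQ
  unfold fPP
  fun_prop (disch := assumption)

end taudiff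

/-- The coefficients `e`, `g₂`, `g₃` are holomorphic in `τ`: near a given point they are
rational functions of values of derivatives of `ϑ` at one suitable `z`. -/
lemma diff_coeffs {τ : ℂ} (hτ : 0 < τ.im) : DifferentiableAt ℂ eC τ ∧ DifferentiableAt ℂ g2C τ ∧
    DifferentiableAt ℂ g3C τ := by
  obtain ⟨z, hz, hQ⟩ := exists_good hτ
  have dR := diff_tau_fR hτ hz
  have dQ := diff_tau_fQ hτ hz
  have dS := diff_tau_fS hτ hz
  have dP := diff_tau_fPP hτ hz hQ
  have hev : ∀ᶠ t in nhds τ, (0 < t.im ∧ Th 0 t z ≠ 0) ∧ fQ t z ≠ 0 :=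
    (eventually_ne_tau hτ hz).and (dQ.continuousAt.eventually_ne hQ)
  have he : DifferentiableAt ℂ eC τ := by
    have : DifferentiableAt ℂ (fun t => fR t z - fPP t z) τ := by fun_prop
    refine this.congr_of_eventuallyEq ?_
    filter_upwards [hev] with t ⟨⟨h1, h2⟩, h3⟩
    rw [fR_eq h2, fPP_eq h1 h2 h3]; ring
  have hg : DifferentiableAt ℂ g2C τ := by
    have : DifferentiableAt ℂ (fun t => 2 * (6 * fPP t z ^ 2 - fS t z)) τ := by fun_prop
    refine this.congr_of_eventuallyEq ?_
    filter_upwards [hev] with t ⟨⟨h1, h2⟩, h3⟩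
    rw [fS_eq h1 h2, fPP_eq h1 h2 h3]; ring
  refine ⟨he, hg, ?_⟩
  have : DifferentiableAt ℂ (fun t => 4 * fPP t z ^ 3 - g2C t * fPP t z - fQ t z ^ 2) τ := by
    fun_prop
  refine this.congr_of_eventuallyEq ?_
  filter_upwards [hev] with t ⟨⟨h1, h2⟩, h3⟩
  rw [fweier h1 h2, fPP_eq h1 h2 h3]; ring

section tauderiv

variable {τ z : ℂ}

lemma hasDerivAt_Th_tau' (hτ : 0 < τ.im) (hz : Th 0 τ z ≠ 0) :
    HasDerivAt (fun t => Th 0 t z)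
      (kap * (Th 0 τ z * (fJ τ z ^ 2 - (fP τ z + eC τ)))) τ := by
  rw [← Th_two_eq hz]; exact hasDerivAt_Th_tau 0 hτ z

lemma hasDerivAt_fP_tau (hτ : 0 < τ.im) (hz : Th 0 τ z ≠ 0) :
    HasDerivAt (fun t => fP t z) (kap * (2 * fJ τ z * fQ τ z + (6 * fP τ z ^ 2 - g2C τ / 2)
      - 2 * (fP τ z + eC τ) ^ 2) - deriv eC τ) τ := by
  have h0 := hasDerivAt_Th_tau 0 hτ z
  have h1 := hasDerivAt_Th_tau 1 hτ z
  have h2 := hasDerivAt_Th_tau 2 hτ z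
  have he := (diff_coeffs hτ).1.hasDerivAt
  have := (((h1.pow 2).sub (h0.mul h2)).sub (he.mul (h0.pow 2))).div (h0.pow 2) (pow_ne_zero 2 hz)
  refine HasDerivAt.congr_deriv (f := fun t => fP t z) this ?_
  simp only [Pi.pow_apply, Pi.sub_apply, Pi.mul_apply, Nat.cast_ofNat, Nat.add_one_sub_one, pow_one,
    zero_add, Nat.reduceAdd]
  rw [Th_four_eq hτ hz, Th_three_eq hz, Th_two_eq hz, Th_one_eq hz]
  field_simp
  ring

lemma hasDerivAt_fQ_tau (hτ : 0 < τ.im) (hz : Th 0 τ z ≠ 0) :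
    HasDerivAt (fun t => fQ t z) (kap * (fQ τ z * (6 * fP τ z - 6 * eC τ)
      + 2 * fJ τ z * (6 * fP τ z ^ 2 - g2C τ / 2))) τ := by
  have h0 := hasDerivAt_Th_tau 0 hτ z
  have h1 := hasDerivAt_Th_tau 1 hτ z
  have h2 := hasDerivAt_Th_tau 2 hτ z
  have h3 := hasDerivAt_Th_tau 3 hτ z
  have := ((((h0.pow 2).mul h3).sub (((h0.const_mul 3).mul h1).mul h2)).add
    ((h1.pow 3).const_mul 2)).neg.div (h0.pow 3) (pow_ne_zero 3 hz)
  refine HasDerivAt.congr_deriv (f := fun t => fQ t z) this ?_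
  simp only [Pi.pow_apply, Pi.sub_apply, Pi.mul_apply, Pi.neg_apply, Pi.add_apply, Nat.cast_ofNat,
    Nat.add_one_sub_one, pow_one, zero_add, Nat.reduceAdd]
  rw [Th_five_eq hτ hz, Th_four_eq hτ hz, Th_three_eq hz, Th_two_eq hz, Th_one_eq hz]
  field_simp
  ring

end tauderiv

/-- `1`, `℘`, `℘²` are linearly independent. -/
lemma poly_indep {τ : ℂ} (hτ : 0 < τ.im) {a0 a1 a2 : ℂ}
    (h : ∀ z, Th 0 τ z ≠ 0 → a0 + a1 * fP τ z + a2 * fP τ z ^ 2 = 0) :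
    a0 = 0 ∧ a1 = 0 ∧ a2 = 0 := by
  have h0 := differentiable_Th 0 hτ
  have hA := differentiable_thA hτ
  have hD := Th_one_ne_zero hτ
  have hne := Th_zero_ne hτ
  have z0 : Th 0 τ 0 = 0 := Th_even_zero Even.zero τ
  have e1 : ∀ z, a0 * Th 0 τ z ^ 4 + a1 * Th 0 τ z ^ 2 * thA τ z + a2 * thA τ z ^ 2 = 0 := by
    refine entire_cancel h0 (by fun_prop) hne fun z => ?_
    by_cases hz : Th 0 τ z = 0
    · rw [hz, zero_mul]
    · have := h z hz
      rw [fP] at this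
      field_simp at this
      linear_combination Th 0 τ z * this
  have h2 : a2 = 0 := by
    have := e1 0
    simpa [z0, thA_zero, hD] using this
  have e2 : ∀ z, a0 * Th 0 τ z ^ 2 + a1 * thA τ z = 0 := by
    refine entire_cancel (h0.pow 2) (by fun_prop) (by simpa using hne) fun z => ?_
    have := e1 z
    rw [h2] at this
    simp only [Pi.pow_apply]
    linear_combination this
  have h1 : a1 = 0 := by
    have := e2 0
    simpa [z0, thA_zero, hD] using this
  obtain ⟨z, hz⟩ := hne
  refine ⟨?_, h1, h2⟩
  have := e2 z
  simpa [h1, hz] using this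

/-- Ramanujan's differential equations, obtained by differentiating the Weierstrass equation
in `τ` and comparing coefficients of powers of `℘`. -/
lemma ramanujan {τ : ℂ} (hτ : 0 < τ.im) :
    deriv eC τ = kap * (g2C τ / 6 - 2 * eC τ ^ 2) ∧
    deriv g2C τ = kap * (12 * g3C τ - 8 * eC τ * g2C τ) ∧
    deriv g3C τ = kap * (2 / 3 * g2C τ ^ 2 - 12 * eC τ * g3C τ) := by
  obtain ⟨de, dg2, dg3⟩ := diff_coeffs hτ
  have key : ∀ z, Th 0 τ z ≠ 0 →
      (-12 * kap * eC τ * g3C τ + kap * g2C τ * (2 * eC τ ^ 2 + g2C τ / 2) + g2C τ * deriv eC τ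
        - deriv g3C τ)
      + (12 * kap * g3C τ - 8 * kap * eC τ * g2C τ - deriv g2C τ) * fP τ z
      + (2 * kap * g2C τ - 24 * kap * eC τ ^ 2 - 12 * deriv eC τ) * fP τ z ^ 2 = 0 := by
    intro z hz
    have hP := hasDerivAt_fP_tau hτ hz
    have hQ := hasDerivAt_fQ_tau hτ hz
    have d := (((hP.pow 3).const_mul 4).sub (dg2.hasDerivAt.mul hP)).sub dg3.hasDerivAt
    have := (hQ.pow 2).unique (d.congr_of_eventuallyEq (by
      filter_upwards [eventually_ne_tau hτ hz] with t ht
      exact fweier ht.1 ht.2))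
    simp at this
    have hw := fweier hτ hz
    linear_combination (-1 : ℂ) * this + 12 * kap * (fP τ z - eC τ) * hw
  obtain ⟨k0, k1, k2⟩ := poly_indep hτ key
  have e1 : deriv eC τ = kap * (g2C τ / 6 - 2 * eC τ ^ 2) := by linear_combination (-1 / 12) * k2
  refine ⟨e1, by linear_combination (-1 : ℂ) * k1, ?_⟩
  rw [e1] at k0
  linear_combination (-1 : ℂ) * k0

/-! ### Identification of the coefficients with Eisenstein series -/

/-- The divisor sums over `ℕ` of the statement agree with Mathlib's divisor sums over `ℕ+`. -/
lemma tsum_sigmaD (k : ℕ) (τ : ℂ) :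
    ∑' n : ℕ, (sigmaD k (n + 1) : ℂ) * cexp (2 * π * I * τ * (n + 1)) =
      ∑' n : ℕ+, (ArithmeticFunction.sigma k n : ℂ) * cexp (2 * π * I * τ) ^ (n : ℕ) := by
  rw [tsum_pnat_eq_tsum_succ
    (f := fun n : ℕ => (ArithmeticFunction.sigma k n : ℂ) * cexp (2 * π * I * τ) ^ n)]
  refine tsum_congr fun n => ?_
  rw [sigmaD, ArithmeticFunction.sigma_apply, ← Complex.exp_nat_mul]
  push_cast
  ring_nf

lemma perPair_G {τ : ℂ} (hτ : 0 < τ.im) (k : ℕ) :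
    (perPair τ hτ).G k = ∑' v, EisensteinSeries.eisSummand k v ⟨τ, hτ⟩ := by
  rw [PeriodPair.G, ← (perPair τ hτ).latticeEquivProd.symm.toEquiv.tsum_eq,
    ← ((Equiv.prodComm ℤ ℤ).trans (finTwoArrowEquiv ℤ).symm).tsum_eq]
  refine tsum_congr fun x => ?_
  have := (perPair τ hτ).latticeEquiv_symm_apply x
  simp only [LinearEquiv.coe_toEquiv, this, EisensteinSeries.eisSummand]
  simp [perPair, add_comm]

lemma bernoulli_four' : bernoulli 4 = -1 / 30 := by
  rw [bernoulli_eq_bernoulli'_of_ne_one (by norm_num), bernoulli'_four]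

lemma bernoulli_six' : bernoulli 6 = 1 / 42 := by
  rw [bernoulli_eq_bernoulli'_of_ne_one (by norm_num), bernoulli'_def]
  norm_num [Finset.sum_range_succ, Nat.choose, bernoulli'_eq_zero_of_odd]

lemma zeta_four : riemannZeta 4 = π ^ 4 / 90 := by
  have := riemannZeta_two_mul_nat (k := 2) (by norm_num)
  norm_num [bernoulli_four', Nat.factorial] at this
  rw [this]; ring

lemma zeta_six : riemannZeta 6 = π ^ 6 / 945 := by
  have := riemannZeta_two_mul_nat (k := 3) (by norm_num)
  norm_num [bernoulli_six', Nat.factorial] at this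
  rw [this]; ring

lemma g2C_eq {τ : ℂ} (hτ : 0 < τ.im) : g2C τ = 4 * π ^ 4 / 3 * Eis4 τ := by
  rw [g2C, dif_pos hτ, PeriodPair.g₂, perPair_G, Eis4, tsum_sigmaD]
  have := tsum_eisSummand_eq_tsum_sigma_mul_cexp_pow (k := 4) (by norm_num) ⟨2, rfl⟩ ⟨τ, hτ⟩
  norm_num [Nat.factorial] at this ⊢
  rw [this, zeta_four, mul_pow, mul_pow, Complex.I_pow_four]
  ring

lemma g3C_eq {τ : ℂ} (hτ : 0 < τ.im) : g3C τ = 8 * π ^ 6 / 27 * Eis6 τ := by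
  rw [g3C, dif_pos hτ, PeriodPair.g₃, perPair_G, Eis6, tsum_sigmaD]
  have := tsum_eisSummand_eq_tsum_sigma_mul_cexp_pow (k := 6) (by norm_num) ⟨3, rfl⟩ ⟨τ, hτ⟩
  have hI : I ^ 6 = -1 := by rw [show (6 : ℕ) = 4 + 2 from rfl, pow_add, I_pow_four, I_sq, one_mul]
  norm_num [Nat.factorial] at this ⊢
  rw [this, zeta_six, mul_pow, mul_pow, hI]
  ring

lemma Eis2_eq {τ : ℂ} (hτ : 0 < τ.im) : Eis2 τ = EisensteinSeries.E2 ⟨τ, hτ⟩ := by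
  rw [EisensteinSeries.E2_eq_tsum_cexp, Eis2, tsum_sigmaD]

lemma Eis4_eq {τ : ℂ} (hτ : 0 < τ.im) : Eis4 τ = ModularForm.E₄ ⟨τ, hτ⟩ := by
  rw [EisensteinSeries.q_expansion_bernoulli _ ⟨2, rfl⟩, bernoulli_four', Eis4, tsum_sigmaD]
  norm_num

lemma Eis6_eq {τ : ℂ} (hτ : 0 < τ.im) : Eis6 τ = ModularForm.E₆ ⟨τ, hτ⟩ := by
  rw [EisensteinSeries.q_expansion_bernoulli _ ⟨3, rfl⟩, bernoulli_six', Eis6, tsum_sigmaD]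
  norm_num

lemma etaD_eq (τ : ℂ) : etaD τ = ModularForm.eta τ := by
  rw [etaD, ModularForm.eta]
  congr 1
  · rw [Function.Periodic.qParam]; congr 1; push_cast; ring
  · refine tprod_congr fun n => ?_
    rw [ModularForm.eta_q_eq_cexp]; congr 2; ring

lemma etaD_ne {τ : ℂ} (hτ : 0 < τ.im) : etaD τ ≠ 0 := by
  rw [etaD_eq]; exact ModularForm.eta_ne_zero hτ

lemma hasDerivAt_etaD {τ : ℂ} (hτ : 0 < τ.im) :
    HasDerivAt etaD (π * I / 12 * Eis2 τ * etaD τ) τ := by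
  rw [show etaD = ModularForm.eta from funext etaD_eq]
  have h := (ModularForm.differentiableAt_eta_of_mem_upperHalfPlaneSet (z := τ) hτ).hasDerivAt
  have h2 := ModularForm.logDeriv_eta_eq_E2 ⟨τ, hτ⟩
  rw [← Eis2_eq hτ, logDeriv_apply, div_eq_iff (ModularForm.eta_ne_zero hτ)] at h2
  exact h.congr_deriv h2

/-- The discriminant of the Weierstrass cubic is a multiple of `η²⁴`. -/
lemma disc_eq {τ : ℂ} (hτ : 0 < τ.im) :
    g2C τ ^ 3 - 27 * g3C τ ^ 2 = 4096 * π ^ 12 * etaD τ ^ 24 := by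
  have h := ModularForm.discriminant_eq_E₄_cube_sub_E₆_sq ⟨τ, hτ⟩
  rw [← Eis4_eq hτ, ← Eis6_eq hτ, ModularForm.discriminant, UpperHalfPlane.coe_mk, ← etaD_eq] at h
  rw [g2C_eq hτ, g3C_eq hτ, h]
  ring

/-- The constant `e` is `π² E₂ / 3`: compare the logarithmic derivatives of both sides of
`disc_eq`, the left one given by Ramanujan's equations. -/
lemma eC_eq {τ : ℂ} (hτ : 0 < τ.im) : eC τ = π ^ 2 / 3 * Eis2 τ := by
  obtain ⟨-, dg2, dg3⟩ := diff_coeffs hτ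
  obtain ⟨-, r2, r3⟩ := ramanujan hτ
  have d1 := (dg2.hasDerivAt.pow 3).sub ((dg3.hasDerivAt.pow 2).const_mul 27)
  have d2 := ((hasDerivAt_etaD hτ).pow 24).const_mul (4096 * (π : ℂ) ^ 12)
  have hu := d1.unique (d2.congr_of_eventuallyEq (by
    filter_upwards [eventually_im hτ] with t ht
    exact disc_eq ht))
  rw [r2, r3] at hu
  simp at hu
  have hd := disc_eq hτ
  have hne := etaD_ne hτ
  have hpi : (π : ℂ) ≠ 0 := by exact_mod_cast Real.pi_ne_zero
  have h3 : 4096 * (π : ℂ) ^ 12 * etaD τ ^ 24 * (-24 * kap * eC τ - 2 * π * I * Eis2 τ) = 0 := by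
    linear_combination hu + 24 * kap * eC τ * hd
  have h4 : -24 * kap * eC τ - 2 * π * I * Eis2 τ = 0 := by
    simpa [hpi, hne] using h3
  rw [kap] at h4
  field_simp at h4
  linear_combination (-1 / 24) * h4 - π ^ 2 / 3 * Eis2 τ * I_sq

/-! ### The heat operator on `K ϑ⁵ (a ℘ ℘' + b ℘')` -/

/-- The `z`-independent factor of `φ_{0,5/2} = K ϑ⁵ ℘ ℘'`. -/
def Kc (τ : ℂ) : ℂ := 3 / (π ^ 2 * Th 1 τ 0 ^ 3 * etaD τ ^ 6)

lemma pi_I_eq : (π : ℂ) * I = 1 / (4 * kap) := by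
  rw [kap]; field_simp

lemma pi_sq_eq : (π : ℂ) ^ 2 = -1 / (16 * kap ^ 2) := by
  have : (π : ℂ) ^ 2 = -((π : ℂ) * I) ^ 2 := by rw [mul_pow, I_sq]; ring
  rw [this, pi_I_eq]; have := kap_ne; field_simp; norm_num

lemma Eis2_kap {τ : ℂ} (hτ : 0 < τ.im) : Eis2 τ = -48 * kap ^ 2 * eC τ := by
  rw [eC_eq hτ, pi_sq_eq]; have := kap_ne; field_simp; ring

lemma Eis4_kap {τ : ℂ} (hτ : 0 < τ.im) : Eis4 τ = 192 * kap ^ 4 * g2C τ := by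
  rw [g2C_eq hτ, show (π : ℂ) ^ 4 = (π ^ 2) ^ 2 by ring, pi_sq_eq]
  have := kap_ne; field_simp; ring

lemma Eis6_kap {τ : ℂ} (hτ : 0 < τ.im) : Eis6 τ = -13824 * kap ^ 6 * g3C τ := by
  rw [g3C_eq hτ, show (π : ℂ) ^ 6 = (π ^ 2) ^ 3 by ring, pi_sq_eq]
  have := kap_ne; field_simp; ring

lemma hasDerivAt_Kc {τ : ℂ} (hτ : 0 < τ.im) :
    HasDerivAt Kc (15 * kap * eC τ * Kc τ) τ := by
  have hD := hasDerivAt_Th_tau 1 hτ 0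
  have hpi : (π : ℂ) ≠ 0 := by exact_mod_cast Real.pi_ne_zero
  have hη := hasDerivAt_etaD hτ
  have hD0 := Th_one_ne_zero hτ
  have hη0 := etaD_ne hτ
  have h0 : (π : ℂ) ^ 2 * Th 1 τ 0 ^ 3 * etaD τ ^ 6 ≠ 0 := by positivity
  have := (hasDerivAt_const τ (3 : ℂ)).div (((hD.pow 3).const_mul ((π : ℂ) ^ 2)).mul (hη.pow 6)) h0
  refine HasDerivAt.congr_deriv (f := Kc) this ?_
  have hk := kap_ne
  rw [show 1 + 2 = 3 from rfl, Th_three_zero hτ, Eis2_kap hτ, pi_I_eq, Kc]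
  simp only [Pi.pow_apply]
  field_simp
  norm_num
  ring

/-- `φ_{0,5/2} = K ϑ⁵ ℘ ℘'`: the factor `℘'` comes from the duplication formula, the factor `℘`
from `φ_{0,1}`. -/
lemma phi052_eq {τ z : ℂ} (hτ : 0 < τ.im) (hz : Th 0 τ z ≠ 0) :
    phi052 τ z = Kc τ * Th 0 τ z ^ 5 * (1 * (fP τ z * fQ τ z) + 0 * fQ τ z) := by
  have hD0 := Th_one_ne_zero hτ
  have hη0 := etaD_ne hτ
  have hpi : (π : ℂ) ≠ 0 := by exact_mod_cast Real.pi_ne_zero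
  have e1 : Th 0 τ (2 * z) = -(Th 0 τ z ^ 4 * fQ τ z) / Th 1 τ 0 ^ 3 := by
    rw [eq_div_iff (pow_ne_zero 3 hD0), mul_comm, dup hτ z, fQ]
    field_simp
  have e2 : Eis2 τ = 3 / π ^ 2 * eC τ := by rw [eC_eq hτ]; field_simp
  rw [phi052, phi032, phi01, thetaJ_eq_Th, deriv_Th 0 hτ, deriv_Th _ hτ, e1, e2, Kc,
    show 0 + 1 + 1 = 2 from rfl, zero_add, Th_two_eq hz, Th_one_eq hz]
  field_simp
  ring

/-- The modular heat operator of index `5/2` preserves the shape `K ϑ⁵ (a ℘ ℘' + b ℘')`: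
the contributions of the logarithmic derivative `ϑ_z / ϑ` cancel. -/
lemma heat_step {φ : ℂ → ℂ → ℂ} {a b : ℂ → ℂ} {τ z a' b' : ℂ} (k : ℚ)
    (hφ : ∀ t w, 0 < t.im → Th 0 t w ≠ 0 →
      φ t w = Kc t * Th 0 t w ^ 5 * (a t * (fP t w * fQ t w) + b t * fQ t w))
    (hτ : 0 < τ.im) (hz : Th 0 τ z ≠ 0)
    (ha : HasDerivAt a (kap * a') τ) (hb : HasDerivAt b (kap * b') τ) :
    heatMod (5 / 2) k φ τ z = Kc τ * Th 0 τ z ^ 5 *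
      (24 * kap ^ 2 * (a' + 2 * k * eC τ * a τ - 2 / 5 * b τ) * (fP τ z * fQ τ z)
        + 24 * kap ^ 2 * (b' + (4 + 2 * k) * eC τ * b τ - 11 / 30 * g2C τ * a τ) * fQ τ z) := by
  have hk := kap_ne
  have d1 : ∀ w, Th 0 τ w ≠ 0 → HasDerivAt (φ τ) (Kc τ * Th 0 τ w ^ 5 *
      (5 * fJ τ w * (a τ * (fP τ w * fQ τ w) + b τ * fQ τ w)
        + a τ * (fQ τ w * fQ τ w + fP τ w * (6 * fP τ w ^ 2 - g2C τ / 2))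
        + b τ * (6 * fP τ w ^ 2 - g2C τ / 2))) w := by
    intro w hw
    have hf := hasDerivAt_Th_z 0 hτ w
    have hP := hasDerivAt_fP hτ hw
    have hQ := hasDerivAt_fQ hτ hw
    have := (((hf.pow 5).const_mul (Kc τ)).mul
      (((hP.mul hQ).const_mul (a τ)).add (hQ.const_mul (b τ))))
    refine (this.congr_of_eventuallyEq ?_).congr_deriv ?_
    · filter_upwards [eventually_ne_z hτ hw] with u hu
      exact hφ τ u hτ hu
    · simp only [Pi.pow_apply, Pi.mul_apply, Pi.add_apply, Th_one_eq hw, zero_add]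
      norm_num
      ring
  have d2 : HasDerivAt (deriv (φ τ)) (Kc τ * Th 0 τ z ^ 5 *
      ((25 * fJ τ z ^ 2 - 5 * (fP τ z + eC τ)) * (a τ * (fP τ z * fQ τ z) + b τ * fQ τ z)
        + 10 * fJ τ z * (a τ * (fQ τ z * fQ τ z + fP τ z * (6 * fP τ z ^ 2 - g2C τ / 2))
          + b τ * (6 * fP τ z ^ 2 - g2C τ / 2))
        + a τ * (30 * fP τ z ^ 2 - 3 / 2 * g2C τ) * fQ τ z
        + b τ * 12 * fP τ z * fQ τ z)) z := by
    have hf := hasDerivAt_Th_z 0 hτ z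
    have hP := hasDerivAt_fP hτ hz
    have hQ := hasDerivAt_fQ hτ hz
    have hJ := hasDerivAt_fJ hτ hz
    have hS := ((hP.pow 2).const_mul 6).sub_const (g2C τ / 2)
    have := ((hf.pow 5).const_mul (Kc τ)).mul
      ((((hJ.const_mul 5).mul (((hP.mul hQ).const_mul (a τ)).add (hQ.const_mul (b τ)))).add
        (((hQ.mul hQ).add (hP.mul hS)).const_mul (a τ))).add (hS.const_mul (b τ)))
    refine (this.congr_of_eventuallyEq ?_).congr_deriv ?_
    · filter_upwards [eventually_ne_z hτ hz] with u hu
      exact (d1 u hu).deriv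
    · simp only [Pi.pow_apply, Pi.mul_apply, Pi.add_apply, Th_one_eq hz, zero_add]
      norm_num
      ring
  have d3 : HasDerivAt (fun t => φ t z) (kap * (Kc τ * Th 0 τ z ^ 5 *
      ((15 * eC τ + 5 * (fJ τ z ^ 2 - (fP τ z + eC τ)))
          * (a τ * (fP τ z * fQ τ z) + b τ * fQ τ z)
        + a' * (fP τ z * fQ τ z) + b' * fQ τ z
        + a τ * (2 * fJ τ z * fQ τ z + 4 * fP τ z ^ 2 - 4 * eC τ * fP τ z - 2 / 3 * g2C τ) * fQ τ z
        + (a τ * fP τ z + b τ) * (fQ τ z * (6 * fP τ z - 6 * eC τ)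
          + 2 * fJ τ z * (6 * fP τ z ^ 2 - g2C τ / 2))))) τ := by
    have hf := hasDerivAt_Th_tau' hτ hz
    have hP := hasDerivAt_fP_tau hτ hz
    have hQ := hasDerivAt_fQ_tau hτ hz
    have hK := hasDerivAt_Kc hτ
    have := (hK.mul (hf.pow 5)).mul ((ha.mul (hP.mul hQ)).add (hb.mul hQ))
    refine (this.congr_of_eventuallyEq ?_).congr_deriv ?_
    · filter_upwards [eventually_ne_tau hτ hz] with t ht
      exact hφ t z ht.1 ht.2
    · simp only [Pi.pow_apply, Pi.mul_apply, Pi.add_apply, (ramanujan hτ).1]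
      norm_num
      ring
  have c1 : (12 : ℂ) / (2 * π * I) = 24 * kap := by rw [kap]; field_simp; norm_num
  have c2 : (3 : ℂ) / (4 * π ^ 2 * ((5 / 2 : ℚ) : ℂ)) = -(24 / 5) * kap ^ 2 := by
    rw [pi_sq_eq]; push_cast; field_simp; norm_num
  rw [heatMod, heatOp, c1, c2, d3.deriv, d2.deriv, hφ τ z hτ hz, Eis2_kap hτ]
  ring

/-- degree-3 modular differential equation for the elliptic genus of `CY₅`:
`H^{(5/2)}_{4}H^{(5/2)}_{2}H^{(5/2)}_{0}(φ_{0,5/2}) − (611/25)·E₄·H^{(5/2)}_{0}(φ_{0,5/2})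
 + (88/25)·E₆·φ_{0,5/2} = 0` where `ϑ(τ,z) ≠ 0`. -/
theorem statement7 (τ z : ℂ) (hτ : 0 < τ.im) (hθ : thetaJ τ z ≠ 0) :
    heatMod (5/2) 4 (heatMod (5/2) 2 (heatMod (5/2) 0 phi052)) τ z
      - (611/25) * Eis4 τ * heatMod (5/2) 0 phi052 τ z
      + (88/25) * Eis6 τ * phi052 τ z = 0 := by
  rw [thetaJ_eq_Th] at hθ
  have hk := kap_ne
  have s1 : ∀ t w, 0 < t.im → Th 0 t w ≠ 0 → heatMod (5 / 2) 0 phi052 t w =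
      Kc t * Th 0 t w ^ 5 * ((fun _ => 0) t * (fP t w * fQ t w)
        + (fun t => -(44 / 5) * kap ^ 2 * g2C t) t * fQ t w) := by
    intro t w ht hw
    rw [heat_step (a := fun _ => 1) (b := fun _ => 0) (a' := 0) (b' := 0) 0
      (fun t w ht hw => phi052_eq ht hw) ht hw
      (by simpa using hasDerivAt_const t (1 : ℂ)) (by simpa using hasDerivAt_const t (0 : ℂ))]
    push_cast
    ring
  have s2 : ∀ t w, 0 < t.im → Th 0 t w ≠ 0 →
      heatMod (5 / 2) 2 (heatMod (5 / 2) 0 phi052) t w =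
      Kc t * Th 0 t w ^ 5 * ((fun t => 2112 / 25 * kap ^ 4 * g2C t) t * (fP t w * fQ t w)
        + (fun t => -(12672 / 5) * kap ^ 4 * g3C t) t * fQ t w) := by
    intro t w ht hw
    have d2 := (diff_coeffs ht).2.1.hasDerivAt
    rw [(ramanujan ht).2.1] at d2
    rw [heat_step (a' := 0)
      (b' := -(44 / 5) * kap ^ 2 * (12 * g3C t - 8 * eC t * g2C t)) 2 s1 ht hw
      (by simpa using hasDerivAt_const t (0 : ℂ))
      ((d2.const_mul (-(44 / 5) * kap ^ 2)).congr_deriv (by ring))]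
    push_cast
    ring
  have d2 := (diff_coeffs hτ).2.1.hasDerivAt
  have d3 := (diff_coeffs hτ).2.2.hasDerivAt
  rw [(ramanujan hτ).2.1] at d2
  rw [(ramanujan hτ).2.2] at d3
  rw [heat_step (a' := 2112 / 25 * kap ^ 4 * (12 * g3C τ - 8 * eC τ * g2C τ))
    (b' := -(12672 / 5) * kap ^ 4 * (2 / 3 * g2C τ ^ 2 - 12 * eC τ * g3C τ)) 4 s2 hτ hθ
    ((d2.const_mul (2112 / 25 * kap ^ 4)).congr_deriv (by ring))
    ((d3.const_mul (-(12672 / 5) * kap ^ 4)).congr_deriv (by ring)),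
    s1 τ z hτ hθ, phi052_eq hτ hθ, Eis4_kap hτ, Eis6_kap hτ]
  push_cast
  ring
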